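/- arXiv:2306.14625 — 9 statements merged into one kernel-verified Lean document; each statement's English description precedes it below -/
import Mathlib

section
/- Let G be a finite simple connected graph with n ≥ 2 vertices and m edges, and let U_G be its Grover matrix. Then det(U_G) ∈ {−1, 1}, and for every nonzero u ∈ ℂ, u^{2m} · det(I_{2m} − u⁻¹·U_G) = det(U_G) · det(I_{2m} − u·U_G). Equivalently, the zeta function ζ_{U_G}(u) = (det(I_{2m} − u·U_G))⁻¹ satisfies ζ_{U_G}(1/u) = det(U_G) · u^{2m} · ζ_{U_G}(u), i.e., ζ_{U_G} is an absolute automorphic form of weight −2m. -/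
open Matrix SimpleGraph

/-- The Grover matrix of a finite simple graph `G`, indexed by the arcs (darts) of `G`. -/
noncomputable def groverMatrix {V : Type*} [Fintype V] [DecidableEq V]
    (G : SimpleGraph V) [DecidableRel G.Adj] : Matrix G.Dart G.Dart ℝ :=
  fun e f =>
    if f.toProd.2 = e.toProd.1 then
      (if f = e.symm then 2 / (G.degree f.toProd.2) - 1 else 2 / (G.degree f.toProd.2))
    else 0

theorem groverMatrix_apply_symm {V : Type*} [Fintype V] [DecidableEq V]
    (G : SimpleGraph V) [DecidableRel G.Adj] (e f : G.Dart) :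
    groverMatrix G e f.symm =
      (if f.toProd.1 = e.toProd.1 then (2 / (G.degree e.toProd.1) : ℝ) else 0)
        - (if f = e then 1 else 0) := by
  unfold groverMatrix
  have h1 : f.symm.toProd.2 = f.toProd.1 := rfl
  have h2 : f.symm = e.symm ↔ f = e := Dart.symm_involutive.injective.eq_iff
  rw [h1]
  simp only [h2]
  by_cases h : f = e
  · subst h; simp
  · by_cases h' : f.toProd.1 = e.toProd.1
    · have hd : (G.degree f.toProd.1 : ℝ) = G.degree e.toProd.1 :=
        congrArg (fun v => (G.degree v : ℝ)) h'
      rw [hd]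
      simp [h, h']
    · simp [h, h']

theorem sum_fst_indicator {V : Type*} [Fintype V] [DecidableEq V]
    (G : SimpleGraph V) [DecidableRel G.Adj] (v : V) (c : ℝ) :
    (∑ f : G.Dart, if f.toProd.1 = v then c else 0) = G.degree v * c := by
  rw [← Finset.sum_filter, Finset.sum_const, nsmul_eq_mul]
  congr 2
  exact G.dart_fst_fiber_card_eq_degree v

theorem groverMatrix_mul_transpose {V : Type*} [Fintype V] [DecidableEq V]
    (G : SimpleGraph V) [DecidableRel G.Adj] :
    groverMatrix G * (groverMatrix G)ᵀ = 1 := by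
  ext e e'
  rw [Matrix.mul_apply]
  simp only [Matrix.transpose_apply]
  rw [← Equiv.sum_comp (Function.Involutive.toPerm _ (Dart.symm_involutive (G := G)))]
  simp only [Function.Involutive.coe_toPerm, groverMatrix_apply_symm]
  have hd : (G.degree e.toProd.1 : ℝ) ≠ 0 := by
    have : 0 < G.degree e.toProd.1 := (G.degree_pos_iff_exists_adj _).2 ⟨_, e.adj⟩
    positivity
  by_cases h : e.toProd.1 = e'.toProd.1
  · have key : ∀ f : G.Dart,
      ((if f.toProd.1 = e.toProd.1 then (2 / (G.degree e.toProd.1) : ℝ) else 0)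
        - (if f = e then 1 else 0)) *
      ((if f.toProd.1 = e'.toProd.1 then (2 / (G.degree e'.toProd.1) : ℝ) else 0)
        - (if f = e' then 1 else 0)) =
      (if f.toProd.1 = e.toProd.1 then
        (2 / (G.degree e.toProd.1) * (2 / (G.degree e.toProd.1)) : ℝ) else 0)
        - (if f = e then (2 / (G.degree e.toProd.1) : ℝ) else 0)
        - (if f = e' then (2 / (G.degree e.toProd.1) : ℝ) else 0)
        + (if f = e then (if e = e' then 1 else 0) else 0) := by
      intro f
      rw [← h]
      by_cases h1 : f = e
      · subst h1
        by_cases h2 : f = e'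
        · simp [h2]; ring
        · simp [h2]; ring
      · by_cases h2 : f = e'
        · subst h2
          simp [h1, h]; ring
        · by_cases h3 : f.toProd.1 = e.toProd.1 <;> simp [h1, h2, h3]
    rw [Finset.sum_congr rfl (fun f _ => key f)]
    rw [Finset.sum_add_distrib, Finset.sum_sub_distrib, Finset.sum_sub_distrib,
      sum_fst_indicator]
    simp only [Finset.sum_ite_eq', Finset.mem_univ, if_true, Matrix.one_apply]
    field_simp
    ring
  · have hne : e ≠ e' := fun h' => h (by rw [h'])
    rw [Matrix.one_apply_ne hne]
    apply Finset.sum_eq_zero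
    intro f _
    by_cases h1 : f.toProd.1 = e.toProd.1
    · have h2 : ¬ f.toProd.1 = e'.toProd.1 := fun h' => h (h1.symm.trans h')
      have h3 : f ≠ e' := fun h' => h2 (by rw [h'])
      simp [h2, h3]
    · have h3 : f ≠ e := fun h' => h1 (by rw [h'])
      simp [h1, h3]

/-- For a finite simple connected graph `G` with `n ≥ 2` vertices and `m`
edges, `det U_G ∈ {-1, 1}`, and for every nonzero `u : ℂ`,
`u^(2m) * det(I - u⁻¹ • U_G) = det U_G * det(I - u • U_G)`; i.e. the zeta function
`ζ_{U_G}(u) = det(I - u • U_G)⁻¹` satisfies `ζ_{U_G}(1/u) = det U_G * u^(2m) * ζ_{U_G}(u)`,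
so `ζ_{U_G}` is an absolute automorphic form of weight `-2m`. -/
theorem groverMatrix_absolute_automorphic {V : Type*} [Fintype V] [DecidableEq V]
    (G : SimpleGraph V) [DecidableRel G.Adj] (hG : G.Connected)
    (n m : ℕ) (hn : n = Fintype.card V) (hn2 : 2 ≤ n) (hm : m = G.edgeFinset.card) :
    (groverMatrix G).det ∈ ({-1, 1} : Set ℝ) ∧
    ∀ u : ℂ, u ≠ 0 →
      u ^ (2 * m) *
          ((1 : Matrix G.Dart G.Dart ℂ) - u⁻¹ • (groverMatrix G).map Complex.ofReal).det
        = ((groverMatrix G).map Complex.ofReal).det *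
            ((1 : Matrix G.Dart G.Dart ℂ) - u • (groverMatrix G).map Complex.ofReal).det := by
  have hU := groverMatrix_mul_transpose G
  constructor
  · have h := congrArg Matrix.det hU
    rw [Matrix.det_mul, Matrix.det_transpose, Matrix.det_one] at h
    rcases mul_self_eq_one_iff.1 h with h | h <;> simp [h]
  · intro u hu
    have hW : (groverMatrix G).map Complex.ofReal * ((groverMatrix G).map Complex.ofReal)ᵀ = 1 := by
      have h := congrArg (fun M => M.map Complex.ofRealHom) hU
      simp only [Matrix.map_mul] at h
      rw [Matrix.map_one _ (map_zero _) (map_one _)] at h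
      exact h
    have hcard : Fintype.card G.Dart = 2 * m := by
      rw [hm, G.dart_card_eq_twice_card_edges]
    generalize (groverMatrix G).map Complex.ofReal = W at hW ⊢
    have e1 : u ^ (2 * m) * (1 - u⁻¹ • W).det = (u • (1 : Matrix G.Dart G.Dart ℂ) - W).det := by
      rw [← hcard, ← Matrix.det_smul, smul_sub, smul_smul, mul_inv_cancel₀ hu, one_smul]
    have e2 : (1 - u • W).det = (1 - u • Wᵀ).det := by
      rw [← Matrix.det_transpose]
      simp
    have e3 : W * (1 - u • Wᵀ) = -(u • (1 : Matrix G.Dart G.Dart ℂ) - W) := by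
      rw [mul_sub, mul_one, Matrix.mul_smul, hW, neg_sub]
    rw [e1, e2, ← Matrix.det_mul, e3, Matrix.det_neg, hcard]
    simp [pow_mul]
end

section
/- (Konno–Sato theorem) Let G be a finite simple connected graph with n ≥ 2 vertices and m edges, let U_G be its Grover matrix, and let P_G be the transition probability matrix of the simple symmetric random walk on G. Then for every u ∈ ℂ, (1 − u²)^n · det(I_{2m} − u·U_G) = (1 − u²)^m · det((1 + u²)·I_n − 2u·P_G). -/
open Matrix SimpleGraph

/-- The transition probability matrix of the simple symmetric random walk on `G`:
`P u v = 1 / deg u` if `(u, v)` is an arc of `G`, and `0` otherwise. -/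
noncomputable def transitionMatrix {V : Type*} [Fintype V] [DecidableEq V]
    (G : SimpleGraph V) [DecidableRel G.Adj] : Matrix V V ℝ :=
  fun u v => if G.Adj u v then 1 / (G.degree u) else 0

section KSHelpers

variable {V : Type*} [Fintype V] [DecidableEq V] (G : SimpleGraph V) [DecidableRel G.Adj]

/-- Reversal matrix. -/
noncomputable def ksJ : Matrix G.Dart G.Dart ℂ := fun e f => if f = e.symm then 1 else 0

/-- Origin incidence matrix. -/
noncomputable def ksA : Matrix G.Dart V ℂ := fun e v => if v = e.toProd.1 then 1 else 0

/-- Weighted terminus incidence matrix. -/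
noncomputable def ksB : Matrix V G.Dart ℂ :=
  fun v f => if f.toProd.2 = v then 2 / (G.degree v : ℂ) else 0

lemma ks_grover : (groverMatrix G).map Complex.ofReal = ksA G * ksB G - ksJ G := by
  ext e f
  simp only [Matrix.map_apply, groverMatrix, Matrix.sub_apply, Matrix.mul_apply, ksA, ksB, ksJ]
  simp only [ite_mul, one_mul, zero_mul, Finset.sum_ite_eq', Finset.sum_ite_eq, Finset.mem_univ,
    if_true]
  by_cases h : f = e.symm
  · subst h
    simp
    rfl
  · by_cases h2 : f.toProd.2 = e.toProd.1
    · have hdeg : ∀ v w : V, v = w → G.degree v = G.degree w := by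
        intro v w hvw
        subst hvw
        rfl
      simp [h, h2, hdeg _ _ h2]
    · simp [h, h2]

lemma ks_JJ : ksJ G * ksJ G = 1 := by
  ext e f
  simp only [Matrix.mul_apply, ksJ, ite_mul, one_mul, zero_mul, Finset.sum_ite_eq',
    Finset.sum_ite_eq, Finset.mem_univ, if_true, Dart.symm_symm, Matrix.one_apply]
  simp only [eq_comm]

lemma ks_BA : ksB G * ksA G = (2 : ℂ) • (transitionMatrix G).map Complex.ofReal := by
  ext v w
  simp only [Matrix.mul_apply, ksA, ksB, Matrix.smul_apply, Matrix.map_apply, transitionMatrix]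
  by_cases h : G.Adj v w
  · rw [Finset.sum_eq_single (⟨(w, v), h.symm⟩ : G.Dart)]
    · simp [h, div_eq_mul_inv]
    · intro d _ hd
      by_cases h1 : d.toProd.2 = v
      · by_cases h2 : w = d.toProd.1
        · exact absurd (Dart.ext _ _ (Prod.ext h2.symm h1)) hd
        · simp [h2]
      · simp [h1]
    · simp
  · rw [Finset.sum_eq_zero]
    · simp [h]
    · intro d _
      by_cases h1 : d.toProd.2 = v
      · by_cases h2 : w = d.toProd.1
        · exact absurd (h1 ▸ h2 ▸ d.adj.symm) h
        · simp [h2]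
      · simp [h1]

lemma ks_JA (e : G.Dart) (v : V) :
    (ksJ G * ksA G) e v = if v = e.toProd.2 then 1 else 0 := by
  simp only [Matrix.mul_apply, ksA, ksJ, ite_mul, one_mul, zero_mul, Finset.sum_ite_eq',
    Finset.sum_ite_eq, Finset.mem_univ, if_true]
  rfl

lemma ks_BJA (hd : ∀ v, G.degree v ≠ 0) : ksB G * (ksJ G * ksA G) = (2 : ℂ) • 1 := by
  ext v w
  have hv : (G.degree v : ℂ) ≠ 0 := by exact_mod_cast hd v
  rw [Matrix.mul_apply]
  simp only [ks_JA, ksB, Matrix.smul_apply, Matrix.one_apply]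
  by_cases h : v = w
  · subst h
    have hc : (Finset.univ.filter fun d : G.Dart => d.toProd.2 = v).card = G.degree v := by
      rw [← G.dart_fst_fiber_card_eq_degree v]
      refine Finset.card_bij' (fun d _ => d.symm) (fun d _ => d.symm) ?_ ?_ ?_ ?_ <;> simp
    have : ∀ d : G.Dart, ((if d.toProd.2 = v then 2 / (G.degree v : ℂ) else 0) *
        (if v = d.toProd.2 then 1 else 0)) = if d.toProd.2 = v then 2 / (G.degree v : ℂ) else 0 := by
      intro d
      by_cases h : d.toProd.2 = v <;> simp [h, eq_comm]
    rw [Finset.sum_congr rfl (fun d _ => this d), ← Finset.sum_filter, Finset.sum_const, hc]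
    simp
    field_simp
  · rw [Finset.sum_eq_zero]
    · simp [h]
    · intro d _
      by_cases h1 : d.toProd.2 = v
      · have : ¬ w = d.toProd.2 := fun h2 => h (h1.symm.trans h2.symm)
        simp [this]
      · simp [h1]

lemma ks_det_J (u : ℂ) : (1 + u • ksJ G).det = (1 - u ^ 2) ^ G.edgeFinset.card := by
  classical
  let g := Fintype.equivFin V
  let S := {d : G.Dart // g d.toProd.1 < g d.toProd.2}
  let φ : S ⊕ S → G.Dart := Sum.elim (fun d => d.1) (fun d => d.1.symm)
  have hφ : Function.Bijective φ := by
    constructor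
    · rintro (⟨a, ha⟩ | ⟨a, ha⟩) (⟨b, hb⟩ | ⟨b, hb⟩) h
      · simp only [φ, Sum.elim_inl] at h
        subst h; rfl
      · simp only [φ, Sum.elim_inl, Sum.elim_inr] at h
        subst h
        exact absurd ha (not_lt.mpr hb.le)
      · simp only [φ, Sum.elim_inl, Sum.elim_inr] at h
        subst h
        exact absurd hb (not_lt.mpr ha.le)
      · simp only [φ, Sum.elim_inr] at h
        have := Dart.symm_involutive.injective h
        subst this; rfl
    · intro d
      rcases lt_trichotomy (g d.toProd.1) (g d.toProd.2) with h | h | h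
      · exact ⟨Sum.inl ⟨d, h⟩, rfl⟩
      · exact absurd (g.injective h) d.adj.ne
      · exact ⟨Sum.inr ⟨d.symm, h⟩, Dart.symm_symm d⟩
  let e : S ⊕ S ≃ G.Dart := Equiv.ofBijective φ hφ
  have hcard : Fintype.card S = G.edgeFinset.card := by
    have h1 := Fintype.card_congr e
    rw [Fintype.card_sum, G.dart_card_eq_twice_card_edges] at h1
    omega
  have he1 : ∀ a, e (Sum.inl a) = a.1 := fun _ => rfl
  have he2 : ∀ a, e (Sum.inr a) = a.1.symm := fun _ => rfl
  have hs : ∀ a : S, e (Sum.inl a) = (e (Sum.inr a)).symm := fun a => (Dart.symm_symm a.1).symm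
  have hs2 : ∀ a : S, (e (Sum.inl a)).symm = e (Sum.inr a) := fun a => rfl
  have hb : (1 + u • ksJ G).submatrix e e = fromBlocks 1 (u • 1) (u • 1) 1 := by
    ext (a | a) (b | b) <;>
    simp only [Matrix.submatrix_apply, Matrix.add_apply, Matrix.smul_apply, ksJ,
      fromBlocks_apply₁₁, fromBlocks_apply₁₂, fromBlocks_apply₂₁, fromBlocks_apply₂₂,
      Matrix.one_apply, ← hs, hs2, e.injective.eq_iff, Sum.inl.injEq, Sum.inr.injEq,
      reduceCtorEq, if_false] <;> simp [eq_comm]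
  rw [← Matrix.det_submatrix_equiv_self e, hb, det_fromBlocks_one₁₁, ← hcard]
  have : (1 : Matrix S S ℂ) - (u • 1) * (u • 1) = (1 - u ^ 2) • 1 := by
    simp [sub_smul, smul_smul, pow_two]
  rw [this, det_smul, det_one, mul_one]

end KSHelpers

/-- **Konno–Sato theorem.** For a finite simple connected graph `G` with
`n ≥ 2` vertices and `m` edges, for every `u : ℂ`,
`(1 - u²)^n * det(I_{2m} - u • U_G) = (1 - u²)^m * det((1 + u²) • I_n - 2u • P_G)`. -/
theorem konno_sato {V : Type*} [Fintype V] [DecidableEq V]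
    (G : SimpleGraph V) [DecidableRel G.Adj] (hG : G.Connected)
    (n m : ℕ) (hn : n = Fintype.card V) (hn2 : 2 ≤ n) (hm : m = G.edgeFinset.card) :
    ∀ u : ℂ,
      (1 - u ^ 2) ^ n *
          ((1 : Matrix G.Dart G.Dart ℂ) - u • (groverMatrix G).map Complex.ofReal).det
        = (1 - u ^ 2) ^ m *
            ((1 + u ^ 2) • (1 : Matrix V V ℂ)
              - (2 * u) • (transitionMatrix G).map Complex.ofReal).det := by
  intro u
  have hV : Fintype.card V ≠ 0 := by omega
  haveI : Nontrivial V := Fintype.one_lt_card_iff_nontrivial.mp (by omega)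
  have hd : ∀ v, G.degree v ≠ 0 := fun v => (hG.preconnected.degree_pos_of_nontrivial v).ne'
  have hm0 : m ≠ 0 := by
    obtain ⟨v⟩ := hG.nonempty
    obtain ⟨w, hw⟩ := (G.degree_pos_iff_exists_adj v).mp (Nat.pos_of_ne_zero (hd v))
    rw [hm]
    exact Finset.card_ne_zero_of_mem (a := s(v, w)) (by simpa using hw)
  by_cases hu : 1 - u ^ 2 = 0
  · rw [hu, zero_pow (by omega), zero_pow hm0, zero_mul, zero_mul]
  set c := 1 - u ^ 2 with hc
  have hinv : (1 + u • ksJ G) * (c⁻¹ • (1 - u • ksJ G)) = 1 := by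
    rw [mul_smul_comm]
    have : (1 + u • ksJ G) * (1 - u • ksJ G) = c • 1 := by
      simp only [add_mul, mul_sub, one_mul, mul_one, smul_mul_smul_comm, ks_JJ, hc, sub_smul,
        one_smul, pow_two]
      abel
    rw [this, smul_smul, inv_mul_cancel₀ hu, one_smul]
  have h1 : (1 : Matrix G.Dart G.Dart ℂ) - u • (groverMatrix G).map Complex.ofReal
      = (1 + u • ksJ G) * (1 - ((c⁻¹ • (1 - u • ksJ G)) * (u • ksA G)) * ksB G) := by
    rw [mul_sub, ← Matrix.mul_assoc, ← Matrix.mul_assoc, hinv, ks_grover, Matrix.one_mul,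
      Matrix.smul_mul, smul_sub, mul_one]
    abel
  have h2 : c • (1 - ksB G * ((c⁻¹ • (1 - u • ksJ G)) * (u • ksA G))) =
      (1 + u ^ 2) • (1 : Matrix V V ℂ) - (2 * u) • (transitionMatrix G).map Complex.ofReal := by
    have h3 : ksB G * ((c⁻¹ • (1 - u • ksJ G)) * (u • ksA G)) =
        (c⁻¹ * u) • (ksB G * ksA G - u • (ksB G * (ksJ G * ksA G))) := by
      simp only [Matrix.smul_mul, Matrix.mul_smul, Matrix.sub_mul, Matrix.mul_sub, Matrix.one_mul,
        smul_smul, mul_comm u]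
    rw [h3, ks_BA, ks_BJA G hd, smul_sub, smul_smul, ← mul_assoc, mul_inv_cancel₀ hu, hc]
    module
  rw [h1, det_mul, ks_det_J, det_one_sub_mul_comm, ← h2, det_smul, ← hm, ← hn]
  ring
end

section
/- (Ihara–Bass determinant identity) Let G be a finite simple connected graph with n vertices and m edges, let B be its non-backtracking edge matrix, A its adjacency matrix, and D its degree diagonal matrix. Then for every u ∈ ℂ, (1 − u²)^n · det(I_{2m} − u·B) = (1 − u²)^m · det(I_n − u·A + u²·(D − I_n)). -/
open Matrix SimpleGraph

/-- The non-backtracking edge matrix of a finite simple graph `G`, indexed by the arcs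
(darts) of `G`: `B e f = 1` if `t f = o e` and `f ≠ e⁻¹`, and `B e f = 0` otherwise. -/
def nonBacktrackingMatrix {V : Type*} [Fintype V] [DecidableEq V]
    (G : SimpleGraph V) [DecidableRel G.Adj] : Matrix G.Dart G.Dart ℂ :=
  fun e f => if f.toProd.2 = e.toProd.1 ∧ f ≠ e.symm then 1 else 0

namespace IharaBassAux

variable {V : Type*} [Fintype V] [DecidableEq V] (G : SimpleGraph V) [DecidableRel G.Adj]

/-- origin incidence matrix -/
def S : Matrix G.Dart V ℂ := fun e v => if e.fst = v then 1 else 0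

/-- terminal incidence matrix -/
def T : Matrix V G.Dart ℂ := fun v e => if e.snd = v then 1 else 0

/-- reversal matrix -/
def J : Matrix G.Dart G.Dart ℂ := fun e f => if f = e.symm then 1 else 0

lemma nb_eq : nonBacktrackingMatrix G = S G * T G - J G := by
  ext e f
  simp only [nonBacktrackingMatrix, S, T, J, Matrix.sub_apply, Matrix.mul_apply, ite_mul, one_mul,
    zero_mul, Finset.sum_ite_eq, Finset.mem_univ, if_true]
  by_cases h : f = e.symm
  · subst h; simp
  · simp [h]

lemma J_mul {n : Type*} (M : Matrix G.Dart n ℂ) (e : G.Dart) (v : n) :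
    (J G * M) e v = M e.symm v := by
  simp [J, Matrix.mul_apply]

lemma J_sq : J G * J G = 1 := by
  ext e f
  rw [J_mul]
  simp [J, Matrix.one_apply, eq_comm]

lemma TS : T G * S G = G.adjMatrix ℂ := by
  ext v w
  simp only [T, S, Matrix.mul_apply, adjMatrix_apply, ite_mul, one_mul, zero_mul]
  by_cases h : G.Adj v w
  · rw [if_pos h, Finset.sum_eq_single (⟨(w, v), h.symm⟩ : G.Dart)]
    · simp
    · intro b _ hb
      by_cases h1 : b.snd = v
      · by_cases h2 : b.fst = w
        · exact absurd (Dart.ext _ _ (Prod.ext h2 h1)) hb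
        · simp [h2]
      · simp [h1]
    · simp
  · rw [if_neg h]
    refine Finset.sum_eq_zero fun b _ => ?_
    by_cases h1 : b.snd = v
    · by_cases h2 : b.fst = w
      · subst h1 h2; exact absurd b.adj.symm h
      · simp [h2]
    · simp [h1]

lemma TJS : T G * (J G * S G) = Matrix.diagonal (fun v => (G.degree v : ℂ)) := by
  ext v w
  rw [Matrix.mul_apply]
  simp only [J_mul, T, S, Matrix.diagonal_apply, ite_mul, one_mul, zero_mul]
  by_cases h : v = w
  · subst h
    rw [if_pos rfl, ← G.dart_fst_fiber_card_eq_degree v]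
    rw [← (Equiv.sum_comp (Dart.symm_involutive (G := G)).toPerm _)]
    simp [Finset.sum_ite, Finset.filter_filter]
  · rw [if_neg h]
    refine Finset.sum_eq_zero fun b _ => ?_
    by_cases h1 : b.snd = v
    · subst h1; simp [h]
    · simp [h1]

lemma det_J (u : ℂ) : (1 + u • J G).det = (1 - u ^ 2) ^ G.edgeFinset.card := by
  let σ := Fintype.equivFin V
  let P := {d : G.Dart // σ d.fst < σ d.snd}
  let f : P ⊕ P → G.Dart := Sum.elim (fun d => d.1) (fun d => d.1.symm)
  have hf : Function.Bijective f := by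
    constructor
    · rintro (⟨a, ha⟩ | ⟨a, ha⟩) (⟨b, hb⟩ | ⟨b, hb⟩) h
      · simp only [f, Sum.elim_inl] at h; subst h; rfl
      · simp only [f, Sum.elim_inl, Sum.elim_inr] at h
        subst h
        exact absurd ha (not_lt.2 hb.le)
      · simp only [f, Sum.elim_inl, Sum.elim_inr] at h
        subst h
        exact absurd ha (not_lt.2 hb.le)
      · simp only [f, Sum.elim_inr] at h
        have := (Dart.symm_involutive (G := G)).injective h
        subst this; rfl
    · intro d
      rcases lt_trichotomy (σ d.fst) (σ d.snd) with h | h | h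
      · exact ⟨Sum.inl ⟨d, h⟩, rfl⟩
      · exact absurd (σ.injective h) d.fst_ne_snd
      · exact ⟨Sum.inr ⟨d.symm, h⟩, by simp [f]⟩
  let φ : P ⊕ P ≃ G.Dart := Equiv.ofBijective f hf
  have hc : Fintype.card P = G.edgeFinset.card := by
    have h1 := Fintype.card_congr φ
    rw [Fintype.card_sum, G.dart_card_eq_twice_card_edges] at h1
    omega
  have hφl : ∀ a, φ (Sum.inl a) = a.1 := fun _ => rfl
  have hφr : ∀ a, φ (Sum.inr a) = a.1.symm := fun _ => rfl
  have hne : ∀ a b : P, a.1 ≠ b.1.symm := fun a b h => by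
    have := hf.1 (a₁ := Sum.inl a) (a₂ := Sum.inr b) h
    simp at this
  have hinj : ∀ a b : P, a.1.symm = b.1.symm ↔ a = b := fun a b => by
    rw [(Dart.symm_involutive (G := G)).injective.eq_iff, Subtype.ext_iff]
  have hval : ∀ a b : P, a.1 = b.1 ↔ a = b := fun a b => Subtype.ext_iff.symm
  have hm : (1 + u • J G).submatrix φ φ = fromBlocks 1 (u • 1) (u • 1) 1 := by
    ext (a | a) (b | b)
    · simp [hφl, J, Matrix.one_apply, hne, hval]
    · simp [hφl, hφr, J, Matrix.one_apply, hne, hinj, eq_comm]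
    · simp [hφl, hφr, J, Matrix.one_apply, (hne _ _).symm, hval, eq_comm]
    · simp [hφr, J, Matrix.one_apply, (hne _ _).symm, hinj]
  rw [← Matrix.det_submatrix_equiv_self φ, hm, det_fromBlocks_one₁₁, ← hc]
  have : (1 : Matrix P P ℂ) - u • 1 * u • 1 = (1 - u ^ 2) • 1 := by
    simp [sub_smul, smul_smul, pow_two]
  rw [this, det_smul, det_one, mul_one]

end IharaBassAux

open IharaBassAux

/-- **Ihara–Bass determinant identity.** For a finite simple connected graph
`G` with `n` vertices and `m` edges, for every `u : ℂ`,
`(1 - u²)^n * det(I_{2m} - u • B) = (1 - u²)^m * det(I_n - u • A + u² • (D - I_n))`,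
where `B` is the non-backtracking edge matrix, `A` the adjacency matrix and `D` the
degree diagonal matrix of `G`. -/
theorem ihara_bass {V : Type*} [Fintype V] [DecidableEq V]
    (G : SimpleGraph V) [DecidableRel G.Adj] (hG : G.Connected)
    (n m : ℕ) (hn : n = Fintype.card V) (hm : m = G.edgeFinset.card) :
    ∀ u : ℂ,
      (1 - u ^ 2) ^ n *
          ((1 : Matrix G.Dart G.Dart ℂ) - u • nonBacktrackingMatrix G).det
        = (1 - u ^ 2) ^ m *
            ((1 : Matrix V V ℂ) - u • G.adjMatrix ℂ
              + (u ^ 2) • (Matrix.diagonal (fun v => (G.degree v : ℂ))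
                  - (1 : Matrix V V ℂ))).det := by
  intro u
  subst hn hm
  by_cases hw : 1 - u ^ 2 = 0
  · by_cases hm0 : G.edgeFinset.card = 0
    · have hbot : G.edgeFinset = ∅ := Finset.card_eq_zero.1 hm0
      have hadj : ∀ a b, ¬ G.Adj a b := fun a b h => by
        have : s(a, b) ∈ G.edgeFinset := by simpa using h
        simp [hbot] at this
      have hA : G.adjMatrix ℂ = 0 := by ext a b; simp [hadj]
      have hD : ∀ v, G.degree v = 0 := fun v => by
        rw [← card_neighborFinset_eq_degree, Finset.card_eq_zero]
        ext b; simp [hadj]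
      have hu : u ^ 2 = 1 := (sub_eq_zero.1 hw).symm
      have : Nonempty V := hG.nonempty
      simp [hA, hD, hu, Matrix.det_zero]
    · have : Nonempty V := hG.nonempty
      rw [hw, zero_pow hm0, zero_pow Fintype.card_ne_zero, zero_mul, zero_mul]
  · set w := 1 - u ^ 2 with hwdef
    have hinv : (1 + u • J G) * (w⁻¹ • (1 - u • J G)) = 1 := by
      have h0 : (1 + u • J G) * (1 - u • J G) = w • 1 := by
        simp only [add_mul, mul_sub, one_mul, mul_one, smul_mul_smul_comm, J_sq, hwdef, sub_smul,
          one_smul, pow_two]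
        abel
      rw [mul_smul_comm, h0, smul_smul, inv_mul_cancel₀ hw, one_smul]
    have hfac : (1 : Matrix G.Dart G.Dart ℂ) - u • nonBacktrackingMatrix G
        = (1 + u • J G) * (1 - ((w⁻¹ • (1 - u • J G)) * (u • S G)) * T G) := by
      rw [mul_sub, mul_one, ← Matrix.mul_assoc, ← Matrix.mul_assoc, hinv, Matrix.one_mul, nb_eq,
        smul_sub, Matrix.smul_mul]
      abel
    have hdet : w • ((1 : Matrix V V ℂ) - T G * ((w⁻¹ • (1 - u • J G)) * (u • S G)))
        = (1 : Matrix V V ℂ) - u • G.adjMatrix ℂ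
              + (u ^ 2) • (Matrix.diagonal (fun v => (G.degree v : ℂ))
                  - (1 : Matrix V V ℂ)) := by
      rw [← TJS, ← TS, Matrix.smul_mul, Matrix.mul_smul, smul_sub, smul_smul, mul_inv_cancel₀ hw,
        one_smul, Matrix.sub_mul, Matrix.one_mul, Matrix.mul_sub, Matrix.smul_mul, Matrix.mul_smul,
        Matrix.mul_smul, Matrix.mul_smul, Matrix.mul_smul, smul_smul, hwdef, sub_smul, one_smul,
        smul_sub, pow_two]
      abel
    rw [← hdet, det_smul, hfac, det_mul, det_J, det_one_sub_mul_comm]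
    ring
end

section
/- Let n ≥ 3 and let P_{C_n} be the transition probability matrix of the simple symmetric random walk on the cycle graph C_n. Then for every u ∈ ℂ, det((1 + u²)·I_n − 2u·P_{C_n}) = (1 − uⁿ)². -/
open Matrix

/-- Cyclic shift matrix. -/
def shiftM (n : ℕ) : Matrix (ZMod n) (ZMod n) ℂ :=
  Matrix.of fun i j => if j = i + 1 then 1 else 0

lemma shiftM_mul_transpose (n : ℕ) [NeZero n] : shiftM n * (shiftM n)ᵀ = 1 := by
  ext i j
  simp [shiftM, Matrix.mul_apply, Matrix.one_apply, eq_comm]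

lemma det_fin (m : ℕ) (hm : 1 ≤ m) (u : ℂ) (A : Matrix (Fin (m + 1)) (Fin (m + 1)) ℂ)
    (hA : ∀ i j, A i j = (if i = j then 1 else 0) - u * (if j = i + 1 then 1 else 0)) :
    A.det = 1 - u ^ (m + 1) := by
  have hadd : ∀ i : Fin m, i.castSucc + 1 = i.succ := fun i => Fin.coeSucc_eq_succ
  have hlast : Fin.last m + 1 = 0 := Fin.last_add_one m
  have hA1 : ∀ i j : Fin m, A i.castSucc j.succ
      = (if (i : ℕ) = j + 1 then 1 else 0) - u * (if j = i then 1 else 0) := by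
    intro i j
    rw [hA, hadd]
    simp [Fin.ext_iff]
  have hA0 : ∀ i : Fin m, i ≠ ⟨0, hm⟩ → A i.castSucc 0 = 0 := by
    intro i hi
    have : (i : ℕ) ≠ 0 := fun h => hi (Fin.ext h)
    rw [hA, hadd]
    simp [Fin.ext_iff, this]
  have h00 : A (Fin.castSucc ⟨0, hm⟩) 0 = 1 := by
    rw [hA, hadd]
    simp [Fin.ext_iff]
  have hl0 : A (Fin.last m) 0 = -u := by
    rw [hA, hlast]
    have : m ≠ 0 := by omega
    simp [Fin.ext_iff, this]
  have d1 : (A.submatrix Fin.succ Fin.succ).det = 1 := by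
    have key : ∀ i j : Fin m, A i.succ j.succ =
        (if i = j then 1 else 0) - u * (if (j : ℕ) = i + 1 then 1 else 0) := by
      intro i j
      rw [hA]
      have : (j.succ = i.succ + 1) ↔ (j : ℕ) = i + 1 := by
        rw [Fin.ext_iff, Fin.val_add_one]
        split_ifs with h
        · rw [Fin.ext_iff] at h
          simp at h ⊢
          omega
        · simp
      simp [this]
    rw [Matrix.det_of_upperTriangular]
    · simp [key]
    · intro i j hij
      have hij' : j < i := hij
      have h1 : i ≠ j := hij'.ne'
      have h2 : (j : ℕ) ≠ i + 1 := by have := Fin.lt_def.1 hij'; omega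
      simp [key, h1, h2]
  have d2 : (A.submatrix Fin.castSucc Fin.succ).det = (-u) ^ m := by
    rw [Matrix.det_of_lowerTriangular]
    · simp [hA1]
    · intro i j hij
      have hij' : i < j := hij
      have h1 : j ≠ i := hij'.ne'
      have h2 : (i : ℕ) ≠ j + 1 := by have := Fin.lt_def.1 hij'; omega
      simp [hA1, h1, h2]
  rw [Matrix.det_succ_column_zero, Fin.sum_univ_castSucc, Finset.sum_eq_single ⟨0, hm⟩]
  · have e0 : (Fin.castSucc (⟨0, hm⟩ : Fin m)) = 0 := rfl
    have e1 : (Fin.last m).succAbove = Fin.castSucc := by ext; simp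
    have e2 : (0 : Fin (m+1)).succAbove = Fin.succ := by ext; simp
    rw [h00, hl0, e0, e1, e2, d1, d2]
    have : (-1 : ℂ) ^ m * (-u) ^ m = u ^ m := by rw [← mul_pow]; simp
    simp only [Fin.val_last, Fin.val_zero]
    linear_combination (-u) * this
  · intro b _ hb
    simp [hA0 b hb]
  · simp

lemma det_one_sub (n : ℕ) [NeZero n] (hn : 3 ≤ n) (u : ℂ) :
    (1 - u • shiftM n).det = 1 - u ^ n := by
  obtain ⟨m, rfl⟩ : ∃ m, n = m + 1 := ⟨n - 1, by omega⟩
  have h : ∀ i j : ZMod (m + 1), (1 - u • shiftM (m + 1)) i j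
      = (if i = j then 1 else 0) - u * (if j = i + 1 then 1 else 0) := by
    intro i j
    simp [shiftM, Matrix.one_apply]
  exact det_fin m (by omega) u _ h

/-- For `n ≥ 3`, the transition probability matrix `P` of the simple
symmetric random walk on the cycle graph `C_n` (so `P i j = 1/2` iff `j = i ± 1 (mod n)`)
satisfies `det((1 + u²) • I_n - 2u • P) = (1 - uⁿ)²` for every `u : ℂ`. -/
theorem cycle_transition_det (n : ℕ) [NeZero n] (hn : 3 ≤ n)
    (P : Matrix (ZMod n) (ZMod n) ℂ)
    (hP : ∀ i j : ZMod n, P i j = if j = i + 1 ∨ j = i - 1 then 1 / 2 else 0) :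
    ∀ u : ℂ,
      ((1 + u ^ 2) • (1 : Matrix (ZMod n) (ZMod n) ℂ) - (2 * u) • P).det
        = (1 - u ^ n) ^ 2 := by
  intro u
  have h2 : (2 : ZMod n) ≠ 0 := by
    intro h
    have : ((2 : ℕ) : ZMod n) = 0 := by exact_mod_cast h
    rw [ZMod.natCast_eq_zero_iff] at this
    have := Nat.le_of_dvd (by norm_num) this
    omega
  have hS : (2 : ℂ) • P = shiftM n + (shiftM n)ᵀ := by
    ext i j
    have e : (i = j + 1) ↔ (j = i - 1) := by
      rw [eq_sub_iff_add_eq, eq_comm]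
    simp only [Matrix.smul_apply, hP, Matrix.add_apply, Matrix.transpose_apply, shiftM,
      Matrix.of_apply, e, smul_eq_mul]
    by_cases ha : j = i + 1
    · have hb : j ≠ i - 1 := by
        intro hb
        apply h2
        linear_combination hb - ha
      rw [if_pos (Or.inl ha), if_pos ha, if_neg hb]; norm_num
    · by_cases hb : j = i - 1
      · rw [if_pos (Or.inr hb), if_neg ha, if_pos hb]; norm_num
      · rw [if_neg (by tauto), if_neg ha, if_neg hb]; norm_num
  have hf : (1 + u ^ 2) • (1 : Matrix (ZMod n) (ZMod n) ℂ) - (2 * u) • P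
      = (1 - u • shiftM n) * (1 - u • shiftM n)ᵀ := by
    rw [mul_comm 2 u, mul_smul, hS, Matrix.transpose_sub, Matrix.transpose_one,
      Matrix.transpose_smul, sub_mul, mul_sub, mul_sub, smul_mul_smul_comm,
      shiftM_mul_transpose, one_mul, one_mul, mul_one]
    module
  rw [hf, Matrix.det_mul, Matrix.det_transpose, det_one_sub n hn, sq]
end

section
/- Let n ≥ 3 and let U_{C_n} be the Grover matrix of the cycle graph C_n. Then for every u ∈ ℂ, det(I_{2n} − u·U_{C_n}) = (uⁿ − 1)². Equivalently, the zeta function ζ_{U_{C_n}}(u) = (det(I_{2n} − u·U_{C_n}))⁻¹ equals 1/(uⁿ − 1)². -/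
open Matrix

lemma shift_det_fin (m : ℕ) (hm : 1 ≤ m) (u : ℂ) :
    (Matrix.of fun i j : Fin (m + 1) =>
      (if i = j then (1 : ℂ) else 0) - u * (if j = i + 1 then 1 else 0)).det
      = 1 - u ^ (m + 1) := by
  obtain ⟨k, rfl⟩ : ∃ k, m = k + 1 := ⟨m - 1, by omega⟩
  have key : ∀ i j : Fin (k + 2), (j = i + 1 ↔
      (j : ℕ) = if (i : ℕ) = k + 1 then 0 else (i : ℕ) + 1) := by
    intro i j
    rw [Fin.ext_iff, Fin.val_add_one]
    simp only [Fin.ext_iff, Fin.val_last]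
  rw [Matrix.det_succ_column_zero, Fin.sum_univ_succ, Fin.sum_univ_castSucc]
  rw [Finset.sum_eq_zero]
  · have h1 : ((Matrix.of fun i j : Fin (k + 1 + 1) =>
        (if i = j then (1 : ℂ) else 0) - u * (if j = i + 1 then 1 else 0)).submatrix
          (Fin.succAbove 0) Fin.succ).det = 1 := by
      rw [Matrix.det_of_isUpperTriangular]
      · apply Finset.prod_eq_one
        intro i _
        simp [key]
        grind
      · intro i j hij
        have hij' : (j : ℕ) < i := hij
        simp [key, Fin.ext_iff]
        grind
    have h2 : ((Matrix.of fun i j : Fin (k + 1 + 1) =>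
        (if i = j then (1 : ℂ) else 0) - u * (if j = i + 1 then 1 else 0)).submatrix
          (Fin.succAbove (Fin.succ (Fin.last k))) Fin.succ).det = (-u) ^ (k + 1) := by
      rw [Matrix.det_of_isLowerTriangular]
      · rw [Finset.prod_eq_pow_card (b := -u)]
        · simp
        intro i _
        simp only [Fin.succ_last, Fin.succAbove_last, Matrix.submatrix_apply, Matrix.of_apply, key, Fin.ext_iff, Fin.val_castSucc, Fin.val_succ]
        grind
      · intro i j hij
        have hij' : (i : ℕ) < j := hij
        simp only [Fin.succ_last, Fin.succAbove_last, Matrix.submatrix_apply, Matrix.of_apply, key, Fin.ext_iff, Fin.val_castSucc, Fin.val_succ]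
        grind
    rw [h1, h2]
    simp [key]
    have : ((-1 : ℂ)) ^ (k + 1) * (-1) ^ (k + 1) = 1 := by
      rw [← mul_pow]; simp
    rw [neg_pow u]
    linear_combination (-u ^ (k + 2)) * this
  · intro i _
    simp [key, Fin.ext_iff]
    grind

lemma shift_det_zmod (n : ℕ) [NeZero n] (hn : 3 ≤ n) (u : ℂ) :
    (Matrix.of fun i j : ZMod n =>
      (if i = j then (1 : ℂ) else 0) - u * (if j = i + 1 then 1 else 0)).det
      = 1 - u ^ n := by
  obtain ⟨m, rfl⟩ : ∃ m, n = m + 1 := ⟨n - 1, by omega⟩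
  rw [← shift_det_fin m (by omega) u,
    ← Matrix.det_submatrix_equiv_self (ZMod.finEquiv (m + 1)).toEquiv]
  congr 1

/-- For `n ≥ 3`, the Grover matrix `U` of the cycle graph `C_n`
(the `2n × 2n` matrix with `2 × 2` blocks `P = [[1,0],[0,0]]` at position `(i, i+1)`,
`Q = [[0,0],[0,1]]` at position `(i, i-1)`, and `0` elsewhere) satisfies
`det(I_{2n} - u • U) = (uⁿ - 1)²` for every `u : ℂ`; equivalently
`ζ_{U}(u) = det(I_{2n} - u • U)⁻¹ = 1 / (uⁿ - 1)²`. -/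
theorem cycle_grover_det (n : ℕ) [NeZero n] (hn : 3 ≤ n)
    (U : Matrix (ZMod n × Fin 2) (ZMod n × Fin 2) ℂ)
    (hU : ∀ (i j : ZMod n) (a b : Fin 2),
      U (i, a) (j, b) =
        if j = i + 1 ∧ a = 0 ∧ b = 0 then 1
        else if j = i - 1 ∧ a = 1 ∧ b = 1 then 1 else 0) :
    ∀ u : ℂ,
      ((1 : Matrix (ZMod n × Fin 2) (ZMod n × Fin 2) ℂ) - u • U).det = (u ^ n - 1) ^ 2 := by
  intro u
  set A : Matrix (ZMod n) (ZMod n) ℂ := Matrix.of fun i j : ZMod n =>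
      (if i = j then (1 : ℂ) else 0) - u * (if j = i + 1 then 1 else 0) with hA
  have h : (1 : Matrix (ZMod n × Fin 2) (ZMod n × Fin 2) ℂ) - u • U
      = Matrix.blockDiagonal (fun a : Fin 2 => if a = 0 then A else Aᵀ) := by
    ext ⟨i, a⟩ ⟨j, b⟩
    have e : j = i - 1 ↔ i = j + 1 := by
      constructor <;> (rintro rfl; ring)
    fin_cases a <;> fin_cases b <;>
      simp [hU, hA, Matrix.blockDiagonal_apply, Matrix.one_apply, e, eq_comm]
  rw [h, Matrix.det_blockDiagonal, Fin.prod_univ_two]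
  simp only [if_true, one_ne_zero, if_false, Matrix.det_transpose]
  rw [hA, shift_det_zmod n hn u]
  ring
end

section
/- Let n ≥ 3 and let U_{C_n} be the Grover matrix of the cycle graph C_n. Then for every λ ∈ ℂ, det(λ·I_{2n} − U_{C_n}) = ∏_{k=1}^{n} (λ − e^{2πik/n})·(λ − e^{−2πik/n}). In particular, the spectrum of U_{C_n} is {e^{2πik/n}, e^{−2πik/n} : k = 1, …, n}, each eigenvalue counted with the indicated multiplicity. -/
open Matrix Complex

/-- The cyclic shift matrix. -/
def shiftMat (n : ℕ) : Matrix (ZMod n) (ZMod n) ℂ := fun i j => if j = i + 1 then 1 else 0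

lemma det_shiftMat (n : ℕ) [NeZero n] (lam : ℂ) :
    (lam • (1 : Matrix (ZMod n) (ZMod n) ℂ) - shiftMat n).det
      = ∏ k : ZMod n, (lam - ZMod.stdAddChar k) := by
  set F : Matrix (ZMod n) (ZMod n) ℂ := fun i k => ZMod.stdAddChar (i * k) with hF
  set G : Matrix (ZMod n) (ZMod n) ℂ := fun i k => ZMod.stdAddChar (-(i * k)) with hG
  have hFG : F * G = (n : ℂ) • (1 : Matrix (ZMod n) (ZMod n) ℂ) := by
    ext i j
    have h := AddChar.sum_mulShift (i - j) (ZMod.isPrimitive_stdAddChar n)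
    rw [Matrix.mul_apply]
    have e : ∀ k, F i k * G k j = ZMod.stdAddChar (k * (i - j)) := by
      intro k
      simp only [hF, hG]
      rw [← AddChar.map_add_eq_mul]
      congr 1
      ring
    simp only [e, h, ZMod.card, Matrix.smul_apply, Matrix.one_apply, sub_eq_zero]
    split_ifs <;> simp
  have hdet : F.det ≠ 0 := by
    intro h0
    have := congrArg Matrix.det hFG
    rw [Matrix.det_mul, h0, zero_mul, Matrix.det_smul, Matrix.det_one, mul_one] at this
    exact pow_ne_zero _ (Nat.cast_ne_zero.mpr (NeZero.ne n)) this.symm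
  have hS : (lam • (1 : Matrix (ZMod n) (ZMod n) ℂ) - shiftMat n) * F
      = F * Matrix.diagonal (fun k => lam - ZMod.stdAddChar k) := by
    ext i k
    rw [Matrix.mul_diagonal, sub_mul, Matrix.smul_mul, one_mul, Matrix.sub_apply,
      Matrix.smul_apply, Matrix.mul_apply]
    simp only [shiftMat, ite_mul, one_mul, zero_mul, Finset.sum_ite_eq', Finset.sum_ite_eq,
      Finset.mem_univ, if_true, hF, add_mul, AddChar.map_add_eq_mul, smul_eq_mul]
    ring
  have := congrArg Matrix.det hS
  rw [Matrix.det_mul, Matrix.det_mul, Matrix.det_diagonal, mul_comm] at this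
  exact mul_left_cancel₀ hdet this

lemma prod_zmod_eq (n : ℕ) [NeZero n] (f : ZMod n → ℂ) :
    ∏ k : ZMod n, f k = ∏ k ∈ Finset.Icc 1 n, f (k : ZMod n) := by
  have h1 : ∀ g : ZMod n → ℂ, ∏ k : ZMod n, g k = ∏ k ∈ Finset.range n, g (k : ZMod n) := by
    intro g
    refine Finset.prod_nbij' (fun k => k.val) (fun k => (k : ZMod n)) ?_ ?_ ?_ ?_ ?_
    · intro a _; simpa using ZMod.val_lt a
    · intro a _; simp
    · intro a _; simp
    · intro a ha; exact ZMod.val_cast_of_lt (by simpa using ha)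
    · intro a _; simp
  rw [← Equiv.prod_comp (Equiv.addRight (1 : ZMod n)), h1, Finset.range_eq_Ico,
    ← Finset.Ico_add_one_right_eq_Icc, ← Finset.prod_Ico_add' _ 0 n 1]
  simp

lemma stdAddChar_nat (n : ℕ) [NeZero n] (k : ℕ) :
    (ZMod.stdAddChar (k : ZMod n) : ℂ) = Complex.exp (2 * Real.pi * Complex.I * k / n) := by
  have := ZMod.stdAddChar_coe (N := n) (k : ℤ)
  simpa using this

/-- For `n ≥ 3`, the Grover matrix `U` of the cycle graph `C_n`
(the `2n × 2n` matrix with `2 × 2` blocks `P = [[1,0],[0,0]]` at position `(i, i+1)`,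
`Q = [[0,0],[0,1]]` at position `(i, i-1)`, and `0` elsewhere) satisfies
`det(λ • I_{2n} - U) = ∏_{k=1}^{n} (λ - e^{2πik/n})(λ - e^{-2πik/n})` for every `λ : ℂ`;
in particular the spectrum of `U` is `{e^{2πik/n}, e^{-2πik/n} : k = 1, …, n}`, each
eigenvalue with the multiplicity indicated by the product. -/
theorem cycle_grover_char_poly (n : ℕ) [NeZero n] (hn : 3 ≤ n)
    (U : Matrix (ZMod n × Fin 2) (ZMod n × Fin 2) ℂ)
    (hU : ∀ (i j : ZMod n) (a b : Fin 2),
      U (i, a) (j, b) =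
        if j = i + 1 ∧ a = 0 ∧ b = 0 then 1
        else if j = i - 1 ∧ a = 1 ∧ b = 1 then 1 else 0) :
    (∀ lam : ℂ,
      (lam • (1 : Matrix (ZMod n × Fin 2) (ZMod n × Fin 2) ℂ) - U).det
        = ∏ k ∈ Finset.Icc 1 n,
            ((lam - Complex.exp (2 * Real.pi * Complex.I * k / n)) *
              (lam - Complex.exp (-(2 * Real.pi * Complex.I * k / n))))) ∧
    spectrum ℂ U = {z : ℂ | ∃ k ∈ Finset.Icc 1 n,
      z = Complex.exp (2 * Real.pi * Complex.I * k / n) ∨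
        z = Complex.exp (-(2 * Real.pi * Complex.I * k / n))} := by
  have hdet : ∀ lam : ℂ,
      (lam • (1 : Matrix (ZMod n × Fin 2) (ZMod n × Fin 2) ℂ) - U).det
        = ∏ k ∈ Finset.Icc 1 n,
            ((lam - Complex.exp (2 * Real.pi * Complex.I * k / n)) *
              (lam - Complex.exp (-(2 * Real.pi * Complex.I * k / n)))) := by
    intro lam
    have hB : lam • (1 : Matrix (ZMod n × Fin 2) (ZMod n × Fin 2) ℂ) - U
        = Matrix.blockDiagonal (fun a : Fin 2 =>
          if a = 0 then lam • (1 : Matrix (ZMod n) (ZMod n) ℂ) - shiftMat n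
          else (lam • (1 : Matrix (ZMod n) (ZMod n) ℂ) - shiftMat n)ᵀ) := by
      ext ⟨i, a⟩ ⟨j, b⟩
      have e : (j = i - 1) ↔ (i = j + 1) := by
        rw [eq_sub_iff_add_eq, eq_comm]
      rw [Matrix.sub_apply, hU, Matrix.blockDiagonal_apply]
      fin_cases a <;> fin_cases b <;>
        simp [Matrix.one_apply, shiftMat, e, eq_comm]
    rw [hB, Matrix.det_blockDiagonal, Fin.prod_univ_two, Finset.prod_mul_distrib]
    simp only [if_true, one_ne_zero, if_false, Matrix.det_transpose]
    congr 1
    · rw [det_shiftMat, prod_zmod_eq]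
      simp only [stdAddChar_nat]
    · rw [det_shiftMat, ← Equiv.prod_comp (Equiv.neg (ZMod n)), prod_zmod_eq]
      simp only [Equiv.neg_apply, AddChar.map_neg_eq_inv, stdAddChar_nat, Complex.exp_neg]
  refine ⟨hdet, ?_⟩
  ext z
  rw [spectrum.mem_iff, Algebra.algebraMap_eq_smul_one, Matrix.isUnit_iff_isUnit_det,
    isUnit_iff_ne_zero, not_not, hdet, Finset.prod_eq_zero_iff]
  simp only [mul_eq_zero, sub_eq_zero, Set.mem_setOf_eq]
end

section
/- Let N be a positive integer and let w, s ∈ ℂ with Re(w) > 2 and Re(s) > 0. Then (1/Γ(w)) · ∫₀^∞ e^{−st}·(e^{Nt} − 1)^{−2}·t^{w−1} dt = Σ_{n₁=0}^{∞} Σ_{n₂=0}^{∞} (s + 2N + (n₁ + n₂)·N)^{−w}, where both the integral and the double series converge absolutely. -/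
open MeasureTheory Complex

lemma aux_norm (a r : ℂ) {t : ℝ} (ht : 0 < t) :
    ‖(t : ℂ) ^ (a - 1) * Complex.exp (-(r * t))‖ = t ^ (a.re - 1) * Real.exp (-(r.re * t)) := by
  rw [norm_mul, Complex.norm_cpow_eq_rpow_re_of_pos ht, Complex.norm_exp]
  simp

lemma aux_real_int {a b : ℝ} (ha : 0 < a) (hb : 0 < b) :
    IntegrableOn (fun t : ℝ => t ^ (a - 1) * Real.exp (-(b * t))) (Set.Ioi 0) := by
  have := integrableOn_rpow_mul_exp_neg_mul_rpow (p := 1) (s := a - 1) (b := b)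
    (by linarith) one_pos hb
  simpa [Real.rpow_one] using this

lemma aux_meas (a r : ℂ) : Measurable (fun t : ℝ => (t : ℂ) ^ (a - 1) * Complex.exp (-(r * t))) := by
  fun_prop

lemma aux_int {a r : ℂ} (ha : 0 < a.re) (hr : 0 < r.re) :
    IntegrableOn (fun t : ℝ => (t : ℂ) ^ (a - 1) * Complex.exp (-(r * t))) (Set.Ioi 0) := by
  refine Integrable.mono' (aux_real_int ha hr) (aux_meas a r).aestronglyMeasurable ?_
  filter_upwards [ae_restrict_mem measurableSet_Ioi] with t ht
  exact (aux_norm a r ht).le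

lemma aux_diff {a r : ℂ} (ha : 0 < a.re) (hr : 0 < r.re) :
    DifferentiableAt ℂ
      (fun r : ℂ => ∫ t in Set.Ioi (0 : ℝ), (t : ℂ) ^ (a - 1) * Complex.exp (-(r * t))) r := by
  have hh : 0 < r.re / 2 := by linarith
  have key := hasDerivAt_integral_of_dominated_loc_of_deriv_le
    (μ := volume.restrict (Set.Ioi (0 : ℝ)))
    (F := fun (r : ℂ) (t : ℝ) => (t : ℂ) ^ (a - 1) * Complex.exp (-(r * t)))
    (F' := fun (r : ℂ) (t : ℝ) => (t : ℂ) ^ (a - 1) * (Complex.exp (-(r * t)) * (-(1 * t))))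
    (x₀ := r) (s := Metric.ball r (r.re / 2))
    (bound := fun t : ℝ => t ^ (a.re + 1 - 1) * Real.exp (-(r.re / 2 * t)))
    (Metric.ball_mem_nhds r hh)
    (Filter.Eventually.of_forall fun x => (aux_meas a x).aestronglyMeasurable)
    (aux_int ha hr)
    (by
      have : Measurable (fun t : ℝ =>
        (t : ℂ) ^ (a - 1) * (Complex.exp (-(r * t)) * (-(1 * t)))) := by fun_prop
      exact this.aestronglyMeasurable)
    (by
      filter_upwards [ae_restrict_mem measurableSet_Ioi] with t ht x hx
      have ht' : 0 < t := ht
      have hx' : r.re / 2 ≤ x.re := by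
        have h1 : |(x - r).re| ≤ ‖x - r‖ := Complex.abs_re_le_norm _
        rw [Metric.mem_ball, dist_eq_norm] at hx
        rw [Complex.sub_re] at h1
        have := (abs_le.mp h1).1
        linarith
      rw [← mul_assoc, norm_mul, aux_norm a x ht']
      have e : t ^ (a.re + 1 - 1) = t ^ (a.re - 1) * t := by
        rw [← Real.rpow_add_one ht'.ne']; ring_nf
      rw [e]
      have : ‖(-(1 * (t : ℂ)))‖ = t := by simp [abs_of_pos ht']
      rw [this]
      have h2 : Real.exp (-(x.re * t)) ≤ Real.exp (-(r.re / 2 * t)) := by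
        apply Real.exp_le_exp.mpr; nlinarith
      have h3 : 0 ≤ t ^ (a.re - 1) * t := by positivity
      nlinarith [mul_le_mul_of_nonneg_left h2 h3])
    (aux_real_int (by linarith) hh)
    (by
      filter_upwards with t x _
      exact ((((hasDerivAt_id x).mul_const (t : ℂ)).neg).cexp).const_mul _)
  exact key.2.differentiableAt

lemma aux_gamma {a r : ℂ} (ha : 0 < a.re) (hr : 0 < r.re) :
    ∫ t in Set.Ioi (0 : ℝ), (t : ℂ) ^ (a - 1) * Complex.exp (-(r * t)) = r ^ (-a) * Gamma a := by
  have hU : IsOpen {z : ℂ | 0 < z.re} := isOpen_lt continuous_const Complex.continuous_re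
  have hf : AnalyticOnNhd ℂ
      (fun r : ℂ => ∫ t in Set.Ioi (0 : ℝ), (t : ℂ) ^ (a - 1) * Complex.exp (-(r * t)))
      {z : ℂ | 0 < z.re} :=
    DifferentiableOn.analyticOnNhd
      (fun z hz => (aux_diff ha hz).differentiableWithinAt) hU
  have hg : AnalyticOnNhd ℂ (fun r : ℂ => r ^ (-a) * Gamma a) {z : ℂ | 0 < z.re} := by
    refine DifferentiableOn.analyticOnNhd (fun z hz => ?_) hU
    refine DifferentiableAt.differentiableWithinAt ?_
    exact ((differentiableAt_id).cpow_const (Or.inl hz)).mul_const _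
  have hpre : IsPreconnected {z : ℂ | 0 < z.re} :=
    (convex_halfSpace_re_gt 0).isPreconnected
  refine hf.eqOn_of_preconnected_of_frequently_eq hg hpre (z₀ := 1) (by simp) ?_ hr
  have ht : Filter.Tendsto (fun n : ℕ => (((1 + 1 / ((n : ℝ) + 1) : ℝ)) : ℂ)) Filter.atTop
      (nhdsWithin 1 {1}ᶜ) := by
    refine tendsto_nhdsWithin_iff.mpr ⟨?_, ?_⟩
    · have := (tendsto_one_div_add_atTop_nhds_zero_nat (𝕜 := ℝ)).const_add 1
      have := (Complex.continuous_ofReal.tendsto _).comp this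
      simpa [Function.comp_def] using this
    · filter_upwards with n
      have : (1 / ((n : ℝ) + 1)) ≠ 0 := by positivity
      simp only [Set.mem_compl_iff, Set.mem_singleton_iff]
      rw [← Complex.ofReal_one, Complex.ofReal_inj]
      intro h
      apply this
      linarith
  refine ht.frequently (Filter.Frequently.of_forall fun n => ?_)
  have hp : (0 : ℝ) < 1 + 1 / ((n : ℝ) + 1) := by positivity
  rw [Complex.integral_cpow_mul_exp_neg_mul_Ioi ha hp, one_div, Complex.inv_cpow, Complex.cpow_neg]
  rw [Complex.arg_ofReal_of_nonneg hp.le]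
  exact Real.pi_pos.ne

lemma aux_hasSum {x : ℝ} (hx : 1 < x) :
    HasSum (fun p : ℕ × ℕ => (x⁻¹) ^ 2 * ((x⁻¹) ^ p.1 * (x⁻¹) ^ p.2)) (((x - 1) ^ 2)⁻¹) := by
  have h0 : 0 < x := by linarith
  have h1 : x⁻¹ < 1 := inv_lt_one_of_one_lt₀ hx
  have hg := hasSum_geometric_of_lt_one (inv_nonneg.mpr h0.le) h1
  have hs : Summable (fun p : ℕ × ℕ => (x⁻¹) ^ p.1 * (x⁻¹) ^ p.2) :=
    hg.summable.mul_of_nonneg hg.summable (fun n => by positivity) (fun n => by positivity)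
  have := (hg.mul hg hs).mul_left ((x⁻¹) ^ 2)
  convert! this using 1
  have : x - 1 ≠ 0 := by linarith
  have : 1 - x⁻¹ ≠ 0 := by linarith
  have e : 1 - x⁻¹ = (x - 1) * x⁻¹ := by field_simp
  rw [e]
  field_simp

lemma aux_exp (N : ℕ) (s : ℂ) (t : ℝ) (p : ℕ × ℕ) :
    Complex.exp (-((s + 2 * N + (p.1 + p.2) * N) * t)) =
      Complex.exp (-(s * t)) *
        (((Real.exp (N * t))⁻¹ ^ 2 *
          ((Real.exp (N * t))⁻¹ ^ p.1 * (Real.exp (N * t))⁻¹ ^ p.2) : ℝ) : ℂ) := by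
  rw [← Real.exp_neg, ← Real.exp_nat_mul, ← Real.exp_nat_mul, ← Real.exp_nat_mul,
    ← Real.exp_add, ← Real.exp_add, Complex.ofReal_exp, ← Complex.exp_add]
  congr 1
  push_cast
  ring

theorem absolute_hurwitz_zeta_of_inv_pow_sub_one_sq (N : ℕ) (hN : 0 < N)
    (w s : ℂ) (hw : 2 < w.re) (hs : 0 < s.re) :
    IntegrableOn
      (fun t : ℝ =>
        Complex.exp (-(s * t)) * ((Complex.exp (N * t) - 1) ^ 2)⁻¹ * (t : ℂ) ^ (w - 1))
      (Set.Ioi (0 : ℝ)) ∧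
    Summable (fun p : ℕ × ℕ =>
      (s + 2 * N + (p.1 + p.2) * N) ^ (-w)) ∧
    (1 / Complex.Gamma w) *
        ∫ t in Set.Ioi (0 : ℝ),
          Complex.exp (-(s * t)) * ((Complex.exp (N * t) - 1) ^ 2)⁻¹ * (t : ℂ) ^ (w - 1)
      = ∑' p : ℕ × ℕ, (s + 2 * N + (p.1 + p.2) * N) ^ (-w) := by
  have hN1 : (1 : ℝ) ≤ N := by exact_mod_cast hN
  have hw0 : 0 < w.re := by linarith
  have hx : ∀ t : ℝ, 0 < t → 1 + t ≤ Real.exp (N * t) := fun t ht => by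
    have := Real.add_one_le_exp (N * t)
    nlinarith
  have hre : ∀ p : ℕ × ℕ, 0 < (s + 2 * N + (p.1 + p.2) * N : ℂ).re := fun p => by
    have : (s + 2 * N + (p.1 + p.2) * N : ℂ).re = s.re + (2 * N + (p.1 + p.2) * N : ℝ) := by
      simp [add_assoc]
    rw [this]
    positivity
  have hcast : ∀ t : ℝ, ((Complex.exp (N * t) - 1) ^ 2)⁻¹
      = ((((Real.exp (N * t) - 1) ^ 2)⁻¹ : ℝ) : ℂ) := fun t => by push_cast; rfl
  -- pointwise bound
  have hbd : ∀ t : ℝ, 0 < t → t ^ (w.re - 1) * Real.exp (-(s.re * t)) *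
      ((Real.exp (N * t) - 1) ^ 2)⁻¹ ≤ t ^ (w.re - 2 - 1) * Real.exp (-(s.re * t)) := by
    intro t ht
    have e : t ^ (w.re - 1) = t ^ (w.re - 2 - 1) * t ^ 2 := by
      rw [← Real.rpow_natCast, ← Real.rpow_add ht]; congr 1; push_cast; ring
    have h1 : ((Real.exp (N * t) - 1) ^ 2)⁻¹ ≤ (t ^ 2)⁻¹ := by
      have := hx t ht
      gcongr
      linarith
    calc _ ≤ t ^ (w.re - 1) * Real.exp (-(s.re * t)) * (t ^ 2)⁻¹ := by gcongr
      _ = _ := by rw [e]; field_simp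
  have hbint := aux_real_int (a := w.re - 2) (by linarith) hs
  have hpt : ∀ t : ℝ, 0 < t → HasSum
      (fun p : ℕ × ℕ => (t : ℂ) ^ (w - 1) *
        Complex.exp (-((s + 2 * N + (p.1 + p.2) * N) * t)))
      (Complex.exp (-(s * t)) * ((Complex.exp (N * t) - 1) ^ 2)⁻¹ * (t : ℂ) ^ (w - 1)) := by
    intro t ht
    have := Complex.hasSum_ofReal.mpr (aux_hasSum (x := Real.exp (N * t)) (by linarith [hx t ht]))
    have := this.mul_left ((t : ℂ) ^ (w - 1) * Complex.exp (-(s * t)))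
    rw [hcast]
    convert! this using 1
    · funext p
      rw [aux_exp, mul_assoc]
    · ring
  have hptn : ∀ t : ℝ, 0 < t → HasSum
      (fun p : ℕ × ℕ => ‖(t : ℂ) ^ (w - 1) *
        Complex.exp (-((s + 2 * N + (p.1 + p.2) * N) * t))‖)
      (t ^ (w.re - 1) * Real.exp (-(s.re * t)) * ((Real.exp (N * t) - 1) ^ 2)⁻¹) := by
    intro t ht
    have := (aux_hasSum (x := Real.exp (N * t)) (by linarith [hx t ht])).mul_left
      (t ^ (w.re - 1) * Real.exp (-(s.re * t)))
    convert! this using 1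
    funext p
    rw [aux_exp, ← mul_assoc, norm_mul, aux_norm w s ht, Complex.norm_real, Real.norm_of_nonneg]
    positivity
  have hFint : ∀ p : ℕ × ℕ, IntegrableOn (fun t : ℝ => (t : ℂ) ^ (w - 1) *
        Complex.exp (-((s + 2 * N + (p.1 + p.2) * N) * t))) (Set.Ioi 0) :=
    fun p => aux_int hw0 (hre p)
  have hsum : Summable fun p : ℕ × ℕ => ∫ t in Set.Ioi (0 : ℝ), ‖(t : ℂ) ^ (w - 1) *
        Complex.exp (-((s + 2 * N + (p.1 + p.2) * N) * t))‖ := by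
    refine summable_of_sum_le
      (c := ∫ t in Set.Ioi (0 : ℝ), t ^ (w.re - 2 - 1) * Real.exp (-(s.re * t)))
      (fun p => integral_nonneg fun t => norm_nonneg _) fun u => ?_
    rw [← integral_finsetSum _ fun p _ => (hFint p).norm]
    refine setIntegral_mono_on (integrable_finsetSum _ fun p _ => (hFint p).norm) hbint
      measurableSet_Ioi fun t ht => ?_
    exact (sum_le_hasSum u (fun _ _ => norm_nonneg _) (hptn t ht)).trans (hbd t ht)
  have hmain := hasSum_integral_of_summable_integral_norm hFint hsum
  have hI : (∫ t in Set.Ioi (0 : ℝ), ∑' p : ℕ × ℕ, (t : ℂ) ^ (w - 1) *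
        Complex.exp (-((s + 2 * N + (p.1 + p.2) * N) * t))) =
      ∫ t in Set.Ioi (0 : ℝ),
          Complex.exp (-(s * t)) * ((Complex.exp (N * t) - 1) ^ 2)⁻¹ * (t : ℂ) ^ (w - 1) :=
    setIntegral_congr_fun measurableSet_Ioi fun t ht => (hpt t ht).tsum_eq
  rw [hI] at hmain
  simp_rw [fun p : ℕ × ℕ => aux_gamma hw0 (hre p)] at hmain
  have hG : Gamma w ≠ 0 := Gamma_ne_zero_of_re_pos hw0
  have hfin := hmain.mul_left (1 / Gamma w)
  have hcongr : (fun p : ℕ × ℕ => 1 / Gamma w *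
      ((s + 2 * N + (p.1 + p.2) * N) ^ (-w) * Gamma w)) =
      fun p : ℕ × ℕ => (s + 2 * N + (p.1 + p.2) * N) ^ (-w) := by
    funext p
    field_simp
  rw [hcongr] at hfin
  refine ⟨?_, hfin.summable, hfin.tsum_eq.symm⟩
  refine Integrable.mono' hbint ?_ ?_
  · have : Measurable (fun t : ℝ =>
        Complex.exp (-(s * t)) * ((Complex.exp (N * t) - 1) ^ 2)⁻¹ * (t : ℂ) ^ (w - 1)) := by
      fun_prop
    exact this.aestronglyMeasurable
  · filter_upwards [ae_restrict_mem measurableSet_Ioi] with t ht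
    refine le_trans (le_of_eq ?_) (hbd t ht)
    rw [hcast, mul_right_comm, mul_comm (Complex.exp _), norm_mul, aux_norm w s ht,
      Complex.norm_real, Real.norm_of_nonneg]
    positivity
end

section
/- Let n ≥ 3, let U_{C_n} be the Grover matrix of the cycle graph C_n, and let w, s ∈ ℂ with Re(w) > 2 and Re(s) > 0. Then (1/Γ(w)) · ∫₀^∞ (det(I_{2n} − e^{t}·U_{C_n}))^{−1}·e^{−st}·t^{w−1} dt = Σ_{k₁=0}^{∞} Σ_{k₂=0}^{∞} (s + 2n + (k₁ + k₂)·n)^{−w}. That is, the absolute Hurwitz zeta function of ζ_{U_{C_n}} equals the multiple Hurwitz zeta function of order 2, ζ₂(w, s + 2n, (n, n)). -/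
open MeasureTheory Matrix Complex

lemma det_shift_fin (k : ℕ) (u : ℂ) :
    (Matrix.of (fun i j : Fin (k+2) =>
      (if i = j then (1:ℂ) else 0) - u * (if j = i + 1 then 1 else 0))).det
      = 1 - u ^ (k+2) := by
  have hval : ∀ i j : Fin (k+2), j = i + 1 ↔ (j : ℕ) = if (i:ℕ) = k+1 then 0 else (i:ℕ)+1 := by
    intro i j
    rw [Fin.ext_iff, Fin.val_add_one]
    simp [Fin.ext_iff]
  obtain ⟨A, hA⟩ : ∃ A : Matrix (Fin (k+2)) (Fin (k+2)) ℂ, A = Matrix.of (fun i j : Fin (k+2) =>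
      (if i = j then (1:ℂ) else 0) - u * (if j = i + 1 then 1 else 0)) := ⟨_, rfl⟩
  have hdiag : ∀ i j : Fin (k+2), (i:ℕ) = j → A i j = 1 := by
    intro i j h
    rw [hA, Matrix.of_apply, if_pos (Fin.ext h), if_neg, mul_zero, sub_zero]
    rw [hval]
    split_ifs <;> omega
  have hzero : ∀ i j : Fin (k+2), (i:ℕ) ≠ j → ((j : ℕ) ≠ if (i:ℕ) = k+1 then 0 else (i:ℕ)+1) →
      A i j = 0 := by
    intro i j h h'
    rw [hA, Matrix.of_apply, if_neg (fun e => h (congrArg _ e)), if_neg, mul_zero, sub_zero]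
    rwa [hval]
  have hsup : ∀ i j : Fin (k+2), ((j : ℕ) = if (i:ℕ) = k+1 then 0 else (i:ℕ)+1) →
      A i j = -u := by
    intro i j h'
    rw [hA, Matrix.of_apply, if_neg, if_pos, mul_one, zero_sub]
    · rwa [hval]
    · rw [Fin.ext_iff]
      split_ifs at h' <;> omega
  rw [← hA]
  rw [Matrix.det_succ_column_zero, Fin.sum_univ_succ, Fin.sum_univ_castSucc]
  rw [Finset.sum_eq_zero]
  · have h1 : (A.submatrix (Fin.succAbove 0) Fin.succ).det = 1 := by
      rw [Matrix.det_of_isUpperTriangular]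
      · apply Finset.prod_eq_one
        intro i _
        exact hdiag _ _ (by simp)
      · intro i j hij
        have hij' : (j:ℕ) < i := hij
        apply hzero
        · simp; omega
        · intro h
          split_ifs at h <;> simp at h <;> omega
    have h2 : (A.submatrix (Fin.succAbove (Fin.succ (Fin.last k))) Fin.succ).det
        = (-u)^(k+1) := by
      rw [Fin.succ_last, Matrix.det_of_isLowerTriangular]
      · rw [Finset.prod_eq_pow_card (b := -u)]
        · simp
        intro i _
        have := i.2
        apply hsup
        simp
        omega
      · intro i j hij
        have hij' : (i:ℕ) < j := hij
        have := i.2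
        apply hzero
        · simp; omega
        · simp; split_ifs <;> omega
    rw [h1, h2, hdiag 0 0 rfl, hsup _ 0 (by simp)]
    have : ((-1:ℂ)^(k+1)) * (-1)^(k+1) = 1 := by rw [← mul_pow]; simp
    rw [neg_pow u]
    simp only [Fin.val_zero, Fin.val_succ, Fin.val_last]
    linear_combination (-u * u^(k+1)) * this
  · intro i _
    have := i.2
    rw [hzero _ 0, mul_zero, zero_mul]
    · simp
    · simp; omega

lemma det_shift (n : ℕ) [NeZero n] (hn : 3 ≤ n) (u : ℂ) :
    (Matrix.of (fun i j : ZMod n => (if i = j then (1:ℂ) else 0) - u * (if j = i + 1 then 1 else 0))).det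
      = 1 - u ^ n := by
  obtain ⟨k, rfl⟩ : ∃ k, n = k + 2 := ⟨n-2, by omega⟩
  exact det_shift_fin k u
  

lemma det_grover (n : ℕ) [NeZero n] (hn : 3 ≤ n)
    (U : Matrix (ZMod n × Fin 2) (ZMod n × Fin 2) ℂ)
    (hU : ∀ (i j : ZMod n) (a b : Fin 2),
      U (i, a) (j, b) =
        if j = i + 1 ∧ a = 0 ∧ b = 0 then 1
        else if j = i - 1 ∧ a = 1 ∧ b = 1 then 1 else 0) (u : ℂ) :
    ((1 : Matrix (ZMod n × Fin 2) (ZMod n × Fin 2) ℂ) - u • U).det = (1 - u^n)^2 := by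
  set A := (Matrix.of (fun i j : ZMod n => (if i = j then (1:ℂ) else 0) - u * (if j = i + 1 then 1 else 0))) with hA
  have : (1 : Matrix (ZMod n × Fin 2) (ZMod n × Fin 2) ℂ) - u • U
      = Matrix.blockDiagonal (fun a : Fin 2 => if a = 0 then A else Aᵀ) := by
    ext ⟨i, a⟩ ⟨j, b⟩
    have e : j = i - 1 ↔ i = j + 1 := by
      rw [eq_sub_iff_add_eq, eq_comm]
    fin_cases a <;> fin_cases b <;>
      simp [hU, Matrix.blockDiagonal_apply, hA, Matrix.one_apply, e, eq_comm (a := i) (b := j)]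
  rw [this, Matrix.det_blockDiagonal]
  have hd : A.det = 1 - u ^ n := det_shift n hn u
  simp [Matrix.det_transpose, hd, sq]

lemma integrable_real_aux {σ b : ℝ} (hσ : 0 < σ) (hb : 0 < b) :
    IntegrableOn (fun t : ℝ => t ^ (σ - 1) * Real.exp (-(b * t))) (Set.Ioi 0) := by
  have := integrableOn_rpow_mul_exp_neg_mul_rpow (p := 1) (s := σ - 1) (b := b) (by linarith) one_pos hb
  simpa using this

lemma cont_aux (w r : ℂ) :
    ContinuousOn (fun t : ℝ => (t : ℂ) ^ (w - 1) * cexp (-(r * t))) (Set.Ioi 0) := by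
  intro t ht
  have ht' : 0 < t := ht
  apply ContinuousAt.continuousWithinAt
  apply ContinuousAt.mul
  · exact (Complex.continuousAt_ofReal_cpow_const _ _ (Or.inr ht'.ne'))
  · fun_prop

lemma norm_aux (w r : ℂ) {t : ℝ} (ht : 0 < t) :
    ‖(t : ℂ) ^ (w - 1) * cexp (-(r * t))‖ = t ^ (w.re - 1) * Real.exp (-(r.re * t)) := by
  rw [norm_mul, norm_cpow_eq_rpow_re_of_pos ht, Complex.norm_exp]
  simp

lemma integrable_aux {w r : ℂ} (hw : 0 < w.re) (hr : 0 < r.re) :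
    IntegrableOn (fun t : ℝ => (t : ℂ) ^ (w - 1) * cexp (-(r * t))) (Set.Ioi 0) := by
  refine Integrable.mono' (integrable_real_aux hw hr)
    ((cont_aux w r).aestronglyMeasurable measurableSet_Ioi) ?_
  filter_upwards [ae_restrict_mem measurableSet_Ioi] with t ht
  exact (norm_aux w r ht).le

lemma integral_norm_aux {w r : ℂ} (hw : 0 < w.re) (hr : 0 < r.re) :
    ∫ t in Set.Ioi (0:ℝ), ‖(t : ℂ) ^ (w - 1) * cexp (-(r * t))‖
      = (1 / r.re) ^ w.re * Real.Gamma w.re := by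
  rw [← Real.integral_rpow_mul_exp_neg_mul_Ioi hw hr]
  exact setIntegral_congr_fun measurableSet_Ioi fun t ht => norm_aux w r ht

lemma integral_aux {w r : ℂ} (hw : 0 < w.re) (hr : 0 < r.re) :
    ∫ t in Set.Ioi (0:ℝ), (t : ℂ) ^ (w - 1) * cexp (-(r * t)) = r ^ (-w) * Complex.Gamma w := by
  set H : Set ℂ := {z | 0 < z.re} with hH
  have hopen : IsOpen H := isOpen_lt continuous_const Complex.continuous_re
  have hconv : Convex ℝ H := convex_halfSpace_re_gt 0
  have hF : DifferentiableOn ℂ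
      (fun r : ℂ => ∫ t in Set.Ioi (0:ℝ), (t : ℂ) ^ (w - 1) * cexp (-(r * t))) H := by
    intro r₀ hr₀
    have hr₀' : 0 < r₀.re := hr₀
    apply DifferentiableAt.differentiableWithinAt
    have key := hasDerivAt_integral_of_dominated_loc_of_deriv_le
      (μ := volume.restrict (Set.Ioi (0:ℝ))) (x₀ := r₀)
      (F := fun (r : ℂ) (t : ℝ) => (t : ℂ) ^ (w - 1) * cexp (-(r * t)))
      (F' := fun (r : ℂ) (t : ℝ) => (t : ℂ) ^ (w - 1) * cexp (-(r * t)) * (-t))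
      (s := {z : ℂ | r₀.re / 2 < z.re})
      (bound := fun t : ℝ => t ^ ((w.re + 1) - 1) * Real.exp (-(r₀.re / 2 * t)))
      ((isOpen_lt continuous_const Complex.continuous_re).mem_nhds
        (by simp only [Set.mem_ofPred_eq]; linarith))
      (Filter.Eventually.of_forall fun r =>
        (cont_aux w r).aestronglyMeasurable measurableSet_Ioi)
      (integrable_aux hw hr₀')
      (((cont_aux w r₀).mul (by fun_prop)).aestronglyMeasurable measurableSet_Ioi)
      ?_ (integrable_real_aux (by linarith) (by linarith)) ?_
    · exact key.2.differentiableAt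
    · filter_upwards [ae_restrict_mem measurableSet_Ioi] with t ht r hr
      have ht' : 0 < t := ht
      have hr' : r₀.re / 2 < r.re := hr
      rw [norm_mul, norm_aux w r ht', norm_neg, Complex.norm_real, Real.norm_of_nonneg ht'.le]
      have e : t ^ ((w.re + 1) - 1) = t ^ (w.re - 1) * t := by
        rw [show w.re + 1 - 1 = (w.re - 1) + 1 by ring, Real.rpow_add_one ht'.ne']
      rw [e, mul_right_comm]
      gcongr
    · filter_upwards with t r hr
      have h1 : HasDerivAt (fun r : ℂ => -(r * t)) (-(t:ℂ)) r := by
        have h0 := ((hasDerivAt_id r).mul_const (t:ℂ)).neg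
        rw [one_mul] at h0
        exact h0
      simpa [mul_assoc] using (h1.cexp.const_mul ((t:ℂ)^(w-1)))
  have hG : DifferentiableOn ℂ (fun r : ℂ => r ^ (-w) * Complex.Gamma w) H := by
    intro r hr
    apply DifferentiableAt.differentiableWithinAt
    exact (differentiableAt_id.cpow_const (Or.inl hr)).mul_const _
  have := (hF.analyticOnNhd hopen).eqOn_of_preconnected_of_mem_closure
    (hG.analyticOnNhd hopen) hconv.isPreconnected (z₀ := 1) (by simp [hH]) ?_
  · exact this hr
  · have hlim : Filter.Tendsto (fun k : ℕ => (((1 + 1 / ((k:ℝ) + 1) : ℝ)) : ℂ)) Filter.atTop (nhds 1) := by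
      have := (tendsto_one_div_add_atTop_nhds_zero_nat (𝕜 := ℝ)).const_add 1
      rw [add_zero] at this
      have h2 := (Complex.continuous_ofReal.tendsto _).comp this
      rw [Complex.ofReal_one] at h2
      exact h2
    refine mem_closure_of_tendsto hlim (Filter.Eventually.of_forall fun k => ?_)
    have hp : (0:ℝ) < 1 / ((k:ℝ) + 1) := by positivity
    generalize (1 / ((k:ℝ) + 1)) = x at hp
    refine ⟨?_, ?_⟩
    · simp only [Set.mem_ofPred_eq]
      rw [Complex.integral_cpow_mul_exp_neg_mul_Ioi hw (by linarith)]
      congr 1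
      rw [one_div, Complex.inv_cpow, Complex.cpow_neg]
      rw [Complex.arg_ofReal_of_nonneg (by linarith)]
      exact Real.pi_pos.ne
    · simp only [Set.mem_singleton_iff]
      norm_cast
      linarith

lemma summable_aux {σ : ℝ} (hσ : 2 < σ) (a : ℝ) (ha : 0 < a) (n : ℕ) (hn : 3 ≤ n) :
    Summable fun p : ℕ × ℕ => (1 / (a + 2 * n + (p.1 + p.2) * n)) ^ σ := by
  have h1 : Summable fun k : ℕ => (1 / ((k:ℝ) + 1)) ^ (σ / 2) := by
    have := (summable_nat_add_iff 1).mpr (Real.summable_one_div_nat_rpow.mpr (show 1 < σ / 2 by linarith))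
    refine this.congr fun k => ?_
    rw [Real.div_rpow (by positivity) (by positivity)]
    simp
  have h2 := h1.mul_of_nonneg h1 (fun _ => by positivity) (fun _ => by positivity)
  refine h2.of_nonneg_of_le (fun p => by positivity) fun p => ?_
  rw [← Real.mul_rpow (by positivity) (by positivity)]
  have h3 : (1 / (a + 2 * n + (p.1 + p.2) * n)) ^ σ = ((1 / (a + 2 * n + (p.1 + p.2) * n)) ^ 2) ^ (σ/2) := by
    rw [← Real.rpow_natCast, ← Real.rpow_mul (by positivity)]
    congr 1
    push_cast; ring
  rw [h3]
  apply Real.rpow_le_rpow (by positivity) _ (by linarith)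
  rw [div_pow, one_pow, div_mul_div_comm, one_mul]
  apply one_div_le_one_div_of_le (by positivity)
  have hn' : (3:ℝ) ≤ n := by exact_mod_cast hn
  have hx : (0:ℝ) ≤ p.1 := by positivity
  have hy : (0:ℝ) ≤ p.2 := by positivity
  have : (p.1:ℝ) + p.2 + 1 ≤ a + 2 * n + (p.1 + p.2) * n := by nlinarith
  calc ((p.1:ℝ) + 1) * (p.2 + 1) ≤ ((p.1:ℝ) + p.2 + 1)^2 := by nlinarith [mul_nonneg hx hy]
    _ ≤ _ := by gcongr

lemma tsum_aux (n : ℕ) (hn : 3 ≤ n) (w s : ℂ) {t : ℝ} (ht : 0 < t) :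
    ((1 - (Real.exp t : ℂ) ^ n) ^ 2)⁻¹ * cexp (-(s * t)) * (t : ℂ) ^ (w - 1)
      = ∑' p : ℕ × ℕ, (t : ℂ) ^ (w - 1) * cexp (-((s + 2 * n + (p.1 + p.2) * n) * t)) := by
  set q : ℂ := cexp (-(n * t)) with hq
  have hq1 : ‖q‖ < 1 := by
    rw [hq, Complex.norm_exp]
    simp only [neg_re, mul_re, natCast_re, ofReal_re, natCast_im, ofReal_im, mul_zero, sub_zero,
      Real.exp_lt_one_iff, Left.neg_neg_iff]
    have : (0:ℝ) < n := by exact_mod_cast (by omega : 0 < n)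
    positivity
  have hne : 1 - q ≠ 0 := by
    intro h
    have : q = 1 := by linear_combination -h
    rw [this] at hq1
    simp at hq1
  have hq0 : q ≠ 0 := Complex.exp_ne_zero _
  have hs : Summable fun k : ℕ => ‖q ^ k‖ := by
    simpa using summable_geometric_of_lt_one (norm_nonneg q) hq1
  have hE : (Real.exp t : ℂ) ^ n = q⁻¹ := by
    rw [hq, Complex.exp_neg, inv_inv, Complex.exp_nat_mul, Complex.ofReal_exp]
  have hterm : ∀ p : ℕ × ℕ, (t : ℂ) ^ (w - 1) * cexp (-((s + 2 * n + (p.1 + p.2) * n) * t))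
      = ((t : ℂ) ^ (w - 1) * cexp (-(s * t)) * q ^ 2) * (q ^ p.1 * q ^ p.2) := by
    intro p
    rw [hq, ← Complex.exp_nat_mul, ← Complex.exp_nat_mul, ← Complex.exp_nat_mul]
    simp only [mul_assoc, ← Complex.exp_add]
    congr 2
    push_cast
    ring
  simp_rw [hterm]
  rw [tsum_mul_left, ← tsum_mul_tsum_of_summable_norm hs hs, tsum_geometric_of_norm_lt_one hq1, hE]
  have h1 : 1 - q⁻¹ = -(1 - q) * q⁻¹ := by field_simp; ring
  rw [h1]
  field_simp

/-- For `n ≥ 3` and the Grover matrix `U` of the cycle graph `C_n`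
(the `2n × 2n` matrix with `2 × 2` blocks `P = [[1,0],[0,0]]` at position `(i, i+1)`,
`Q = [[0,0],[0,1]]` at position `(i, i-1)`, and `0` elsewhere), for `w, s : ℂ` with
`Re w > 2` and `Re s > 0`, the absolute Hurwitz zeta function of
`ζ_U(u) = det(I_{2n} - u • U)⁻¹` equals `ζ₂(w, s + 2n, (n, n))`:
`(1/Γ(w)) ∫₀^∞ det(I_{2n} - e^t • U)⁻¹ e^{-st} t^{w-1} dt
  = Σ_{k₁,k₂ ≥ 0} (s + 2n + (k₁+k₂)n)^{-w}`. -/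
theorem absolute_hurwitz_zeta_cycle_grover (n : ℕ) [NeZero n] (hn : 3 ≤ n)
    (U : Matrix (ZMod n × Fin 2) (ZMod n × Fin 2) ℂ)
    (hU : ∀ (i j : ZMod n) (a b : Fin 2),
      U (i, a) (j, b) =
        if j = i + 1 ∧ a = 0 ∧ b = 0 then 1
        else if j = i - 1 ∧ a = 1 ∧ b = 1 then 1 else 0)
    (w s : ℂ) (hw : 2 < w.re) (hs : 0 < s.re) :
    (1 / Complex.Gamma w) *
        ∫ t in Set.Ioi (0 : ℝ),
          (((1 : Matrix (ZMod n × Fin 2) (ZMod n × Fin 2) ℂ)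
              - (Real.exp t : ℂ) • U).det)⁻¹ *
            Complex.exp (-(s * t)) * (t : ℂ) ^ (w - 1)
      = ∑' p : ℕ × ℕ, (s + 2 * n + (p.1 + p.2) * n) ^ (-w) := by
  have hw0 : 0 < w.re := by linarith
  have hre : ∀ p : ℕ × ℕ, (s + 2 * n + (p.1 + p.2) * n : ℂ).re
      = s.re + 2 * n + (p.1 + p.2) * n := by
    intro p
    simp
  have hpos : ∀ p : ℕ × ℕ, 0 < (s + 2 * n + (p.1 + p.2) * n : ℂ).re := by
    intro p
    rw [hre]
    positivity
  have hcongr : ∫ t in Set.Ioi (0 : ℝ),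
          (((1 : Matrix (ZMod n × Fin 2) (ZMod n × Fin 2) ℂ)
              - (Real.exp t : ℂ) • U).det)⁻¹ *
            Complex.exp (-(s * t)) * (t : ℂ) ^ (w - 1)
      = ∫ t in Set.Ioi (0 : ℝ), ∑' p : ℕ × ℕ,
          (t : ℂ) ^ (w - 1) * cexp (-((s + 2 * n + (p.1 + p.2) * n) * t)) := by
    refine setIntegral_congr_fun measurableSet_Ioi fun t ht => ?_
    rw [det_grover n hn U hU]
    exact tsum_aux n hn w s ht
  have hsum := hasSum_integral_of_summable_integral_norm
    (μ := volume.restrict (Set.Ioi (0:ℝ)))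
    (F := fun (p : ℕ × ℕ) (t : ℝ) =>
      (t : ℂ) ^ (w - 1) * cexp (-((s + 2 * n + (p.1 + p.2) * n) * t)))
    (fun p => integrable_aux hw0 (hpos p)) (by
      simp_rw [fun p => integral_norm_aux hw0 (hpos p), hre]
      exact (summable_aux hw s.re hs n hn).mul_right _)
  rw [hcongr, ← hsum.tsum_eq]
  simp_rw [fun p => integral_aux hw0 (hpos p)]
  have hG : Complex.Gamma w ≠ 0 := Complex.Gamma_ne_zero_of_re_pos hw0
  rw [tsum_mul_right]
  field_simp
end

section
/- Let ℓ ∈ ℤ, let a, b be positive integers, let m(1), …, m(a) and n(1), …, n(b) be positive integers, and set f(x) = x^{ℓ/2} · ∏_{i=1}^{a}(x^{m(i)} − 1) / ∏_{j=1}^{b}(x^{n(j)} − 1) for x > 1, |m| = Σᵢ m(i), |n| = Σⱼ n(j). Then for all w, s ∈ ℂ with Re(w) > b and Re(s) > ℓ/2 + |m| − |n|: (1/Γ(w)) · ∫₀^∞ f(e^t)·e^{−st}·t^{w−1} dt = Σ_{I ⊆ {1,…,a}} (−1)^{a−|I|} · Σ_{k₁,…,k_b ≥ 0} (s − ℓ/2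 + |n| − m(I) + Σ_{j=1}^{b} k_j·n(j))^{−w}, where m(I) = Σ_{i∈I} m(i) and |I| is the cardinality of I; the integral and all the multiple series converge absolutely. -/
open MeasureTheory Complex Finset

lemma pi_sum (b : ℕ) (f : Fin b → ℕ → ℂ) (hf : ∀ j, Summable fun k => ‖f j k‖) :
    Summable (fun k : Fin b → ℕ => ‖∏ j, f j (k j)‖) ∧
      ∑' k : Fin b → ℕ, ∏ j, f j (k j) = ∏ j, ∑' k, f j k := by
  induction b with
  | zero => 
    refine ⟨(hasSum_fintype _).summable, ?_⟩
    simp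
  | succ b ih =>
    obtain ⟨h1, h2⟩ := ih (fun j => f j.succ) (fun j => hf _)
    have e := Fin.consEquiv (fun _ : Fin (b+1) => ℕ)
    constructor
    · rw [← (Fin.consEquiv (fun _ : Fin (b+1) => ℕ)).summable_iff]
      have := Summable.mul_norm (hf 0) h1
      refine this.congr fun x => ?_
      simp [Fin.prod_univ_succ, Fin.consEquiv]
    · rw [← (Fin.consEquiv (fun _ : Fin (b+1) => ℕ)).tsum_eq, Fin.prod_univ_succ, ← h2,
        tsum_mul_tsum_of_summable_norm (hf 0) h1]
      refine tsum_congr fun x => ?_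
      simp [Fin.prod_univ_succ, Fin.consEquiv]

lemma pi_sum_real (b : ℕ) (f : ℕ → ℝ) (hf : Summable fun k => ‖f k‖) :
    Summable (fun k : Fin b → ℕ => ∏ j, f (k j)) := by
  have h := (pi_sum b (fun _ k => (f k : ℂ)) (fun j => by simpa using hf)).1
  refine Summable.of_norm (h.congr fun k => ?_)
  simp [norm_prod]

lemma norm_term (w z : ℂ) (t : ℝ) (ht : 0 < t) :
    ‖(t : ℂ) ^ (w - 1) * exp (-(z * t))‖ = t ^ (w.re - 1) * Real.exp (-(z.re * t)) := by
  rw [norm_mul, norm_cpow_eq_rpow_re_of_pos ht, Complex.norm_exp]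
  simp

lemma meas_term (w z : ℂ) : AEStronglyMeasurable (fun t : ℝ => (t : ℂ) ^ (w - 1) * exp (-(z * t)))
    (volume.restrict (Set.Ioi (0:ℝ))) := by
  refine ContinuousOn.aestronglyMeasurable ?_ measurableSet_Ioi
  refine ContinuousOn.mul (fun t ht => ?_) (by fun_prop)
  exact (continuousAt_ofReal_cpow_const _ _ (Or.inr (ne_of_gt ht))).continuousWithinAt

lemma real_int (σ x : ℝ) (hσ : 0 < σ) (hx : 0 < x) :
    IntegrableOn (fun t : ℝ => t ^ (σ - 1) * Real.exp (-(x * t))) (Set.Ioi 0) := by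
  have := integrableOn_rpow_mul_exp_neg_mul_rpow (p := 1) (s := σ - 1) (b := x) (by linarith) one_pos hx
  simpa using this

lemma int_term (w z : ℂ) (hw : 0 < w.re) (hz : 0 < z.re) :
    IntegrableOn (fun t : ℝ => (t : ℂ) ^ (w - 1) * exp (-(z * t))) (Set.Ioi 0) := by
  refine (real_int w.re z.re hw hz).mono' (meas_term w z) ?_
  filter_upwards [ae_restrict_mem measurableSet_Ioi] with t ht
  rw [norm_term w z t ht]

lemma deriv_term (w z : ℂ) (hw : 0 < w.re) (hz : 0 < z.re) :
    DifferentiableAt ℂ (fun z : ℂ => ∫ t in Set.Ioi (0:ℝ), (t : ℂ) ^ (w - 1) * exp (-(z * t))) z := by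
  have hb := real_int (w.re + 1) (z.re / 2) (by linarith) (by linarith)
  refine (hasDerivAt_integral_of_dominated_loc_of_deriv_le (𝕜 := ℂ)
    (F' := fun (z : ℂ) (t : ℝ) => (t : ℂ) ^ (w - 1) * (exp (-(z * t)) * (-t)))
    (Metric.ball_mem_nhds z (half_pos hz)) (Filter.Eventually.of_forall fun x => meas_term w x)
    (int_term w z hw hz) ?_ ?_ hb ?_).2.differentiableAt
  · have := (meas_term w z).mul (f := fun t : ℝ => (t : ℂ) ^ (w - 1) * exp (-(z * t)))
      (g := fun t : ℝ => (-t : ℂ)) (by fun_prop)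
    refine this.congr (Filter.Eventually.of_forall fun t => ?_)
    simp [mul_assoc]
  · filter_upwards [ae_restrict_mem measurableSet_Ioi] with t ht x hx
    have ht' : 0 < t := ht
    rw [← mul_assoc, norm_mul, norm_term w x t ht]
    have h1 : z.re / 2 ≤ x.re := by
      have := (Complex.abs_re_le_norm (x - z)).trans_lt (mem_ball_iff_norm.mp hx)
      rw [sub_re, abs_lt] at this
      linarith
    have h2 : Real.exp (-(x.re * t)) ≤ Real.exp (-(z.re / 2 * t)) := by
      gcongr
    have h3 : t ^ (w.re + 1 - 1) = t ^ (w.re - 1) * t := by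
      rw [show w.re + 1 - 1 = (w.re - 1) + 1 by ring, Real.rpow_add_one ht'.ne']
    rw [h3]
    simp only [norm_neg, Complex.norm_real, Real.norm_eq_abs, abs_of_pos ht']
    have : 0 ≤ t ^ (w.re - 1) := by positivity
    calc _ ≤ t ^ (w.re - 1) * Real.exp (-(z.re / 2 * t)) * t := by gcongr
      _ = _ := by ring
  · refine Filter.Eventually.of_forall fun t x _ => ?_
    refine HasDerivAt.const_mul _ (HasDerivAt.cexp ?_)
    have h := (hasDerivAt_mul_const (x := x) (t : ℂ)).fun_neg
    exact h

lemma gamma_int (w z : ℂ) (hw : 0 < w.re) (hz : 0 < z.re) :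
    ∫ t in Set.Ioi (0:ℝ), (t : ℂ) ^ (w - 1) * exp (-(z * t)) = z ^ (-w) * Gamma w := by
  have ho : IsOpen {z : ℂ | 0 < z.re} := isOpen_lt continuous_const continuous_re
  have h1 : AnalyticOnNhd ℂ (fun z : ℂ => ∫ t in Set.Ioi (0:ℝ), (t : ℂ) ^ (w - 1) * exp (-(z * t)))
      {z : ℂ | 0 < z.re} :=
    DifferentiableOn.analyticOnNhd (fun z hz => (deriv_term w z hw hz).differentiableWithinAt) ho
  have h2 : AnalyticOnNhd ℂ (fun z : ℂ => z ^ (-w) * Gamma w) {z : ℂ | 0 < z.re} := by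
    refine DifferentiableOn.analyticOnNhd (fun z hz => ?_) ho
    have : z ∈ slitPlane := Or.inl hz
    exact ((differentiableAt_id.cpow_const this).mul_const _).differentiableWithinAt
  refine h1.eqOn_of_preconnected_of_frequently_eq (z₀ := 1) h2
    (convex_halfSpace_re_gt 0).isPreconnected (by simp) ?_ hz
  have key : ∀ r : ℝ, 0 < r → ∫ t in Set.Ioi (0:ℝ), (t : ℂ) ^ (w - 1) * exp (-((r : ℂ) * t))
      = (r : ℂ) ^ (-w) * Gamma w := by
    intro r hr
    rw [integral_cpow_mul_exp_neg_mul_Ioi hw hr, one_div, inv_cpow, cpow_neg]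
    rw [arg_ofReal_of_nonneg hr.le]; exact Real.pi_pos.ne
  have hf : Filter.Tendsto (fun r : ℝ => (r : ℂ)) (nhdsWithin 1 (Set.Ioi 1)) (nhdsWithin 1 {1}ᶜ) := by
    refine tendsto_nhdsWithin_iff.2 ⟨?_, ?_⟩
    · exact (Complex.continuous_ofReal.tendsto' 1 1 (by simp)).mono_left nhdsWithin_le_nhds
    · filter_upwards [self_mem_nhdsWithin] with r hr
      have : r ≠ 1 := ne_of_gt hr
      simpa using this
  refine hf.frequently (Filter.Eventually.frequently ?_)
  filter_upwards [self_mem_nhdsWithin] with r hr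
  exact key r (lt_trans one_pos hr)

lemma real_sum (b : ℕ) (hb : 0 < b) (n : Fin b → ℕ) (hn : ∀ j, 0 < n j) (σ x : ℝ) (hσ : (b : ℝ) < σ)
    (hx : 0 < x) : Summable (fun k : Fin b → ℕ => (x + ∑ j, (k j : ℝ) * n j) ^ (-σ)) := by
  have hb' : (0 : ℝ) < b := by exact_mod_cast hb
  set c := min x 1 with hc
  have hc0 : 0 < c := lt_min hx one_pos
  have h1 : Summable fun k : ℕ => ‖(c * ((k : ℝ) + 1)) ^ (-σ / b)‖ := by
    have h := (summable_nat_add_iff 1).2 (Real.summable_nat_rpow.2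
      (show -σ / b < -1 by rw [div_lt_iff₀ hb']; linarith))
    refine (h.mul_left (c ^ (-σ / b))).congr fun k => ?_
    rw [Real.norm_of_nonneg (by positivity), Real.mul_rpow hc0.le (by positivity)]
    simp
  refine Summable.of_nonneg_of_le (fun k => by positivity) (fun k => ?_) (pi_sum_real b _ h1)
  have hS : 0 < x + ∑ j, (k j : ℝ) * n j := by positivity
  calc (x + ∑ j, (k j : ℝ) * n j) ^ (-σ) = ∏ j : Fin b, (x + ∑ j, (k j : ℝ) * n j) ^ (-σ / b) := by
        rw [prod_const, card_univ, Fintype.card_fin, ← Real.rpow_natCast, ← Real.rpow_mul hS.le]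
        congr 1; field_simp
    _ ≤ _ := by
        refine prod_le_prod (fun _ _ => by positivity) fun j _ => ?_
        refine Real.rpow_le_rpow_of_nonpos (by positivity) ?_ ?_
        · have h2 : (k j : ℝ) * n j ≤ ∑ j, (k j : ℝ) * n j :=
            single_le_sum (f := fun j => (k j : ℝ) * n j) (fun _ _ => by positivity) (mem_univ j)
          have h3 : (1 : ℝ) ≤ n j := by exact_mod_cast hn j
          have h4 : (k j : ℝ) ≤ k j * n j := le_mul_of_one_le_right (by positivity) h3
          have h5 : c * k j ≤ k j := mul_le_of_le_one_left (by positivity) (min_le_right _ _)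
          have h6 : c ≤ x := min_le_left _ _
          linarith
        · rw [neg_div]; have : 0 < σ := by linarith
          have := div_pos this hb'
          linarith

lemma hasSum_term (b : ℕ) (n : Fin b → ℕ) (hn : ∀ j, 0 < n j) (w z : ℂ) (t : ℝ) (ht : 0 < t) :
    ∑' k : Fin b → ℕ, (t : ℂ) ^ (w - 1) * exp (-((z + ∑ j, (k j : ℂ) * (n j : ℂ)) * t)) =
      (t : ℂ) ^ (w - 1) * exp (-(z * t)) * ∏ j, (1 - exp (-((n j : ℂ) * t)))⁻¹ := by
  have hlt : ∀ j, ‖exp (-((n j : ℂ) * t))‖ < 1 := fun j => by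
    have : (0 : ℝ) < n j := by exact_mod_cast hn j
    rw [Complex.norm_exp]
    simp only [neg_re, mul_re, natCast_re, ofReal_re, natCast_im, ofReal_im]
    rw [Real.exp_lt_one_iff]
    have := mul_pos this ht
    linarith
  have h := (pi_sum b (fun j k => exp (-((n j : ℂ) * t)) ^ k) (fun j => by
    simp only [norm_pow]
    exact summable_geometric_of_lt_one (norm_nonneg _) (hlt j))).2
  simp only [tsum_geometric_of_norm_lt_one (hlt _)] at h
  rw [← h, ← tsum_mul_left]
  refine tsum_congr fun k => ?_
  rw [mul_assoc]
  congr 1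
  simp only [← exp_nat_mul]
  rw [← exp_sum, ← exp_add]
  congr 1
  rw [add_mul, neg_add, sum_mul, ← sum_neg_distrib]
  congr 1
  refine sum_congr rfl fun j _ => ?_
  ring

lemma key (b : ℕ) (hb : 0 < b) (n : Fin b → ℕ) (hn : ∀ j, 0 < n j) (w z : ℂ) (hw : (b : ℝ) < w.re)
    (hz : 0 < z.re) :
    IntegrableOn (fun t : ℝ =>
      (t : ℂ) ^ (w - 1) * exp (-(z * t)) * ∏ j, (1 - exp (-((n j : ℂ) * t)))⁻¹) (Set.Ioi 0) ∧
    Summable (fun k : Fin b → ℕ => (z + ∑ j, (k j : ℂ) * (n j : ℂ)) ^ (-w)) ∧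
    ∫ t in Set.Ioi (0:ℝ), (t : ℂ) ^ (w - 1) * exp (-(z * t)) * ∏ j, (1 - exp (-((n j : ℂ) * t)))⁻¹
      = Gamma w * ∑' k : Fin b → ℕ, (z + ∑ j, (k j : ℂ) * (n j : ℂ)) ^ (-w) := by
  have hw0 : 0 < w.re := lt_of_le_of_lt (by positivity) hw
  have hre : ∀ k : Fin b → ℕ, (z + ∑ j, (k j : ℂ) * (n j : ℂ)).re
      = z.re + ∑ j, (k j : ℝ) * n j := fun k => by simp
  have hpos : ∀ k : Fin b → ℕ, 0 < (z + ∑ j, (k j : ℂ) * (n j : ℂ)).re := fun k => by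
    rw [hre]; positivity
  set F : (Fin b → ℕ) → ℝ → ℂ := fun k t =>
    (t : ℂ) ^ (w - 1) * exp (-((z + ∑ j, (k j : ℂ) * (n j : ℂ)) * t)) with hF
  have hFi : ∀ k, IntegrableOn (F k) (Set.Ioi 0) := fun k => int_term w _ hw0 (hpos k)
  have hnorm : ∀ k, ∫ t in Set.Ioi (0:ℝ), ‖F k t‖ =
      (z.re + ∑ j, (k j : ℝ) * n j) ^ (-w.re) * Real.Gamma w.re := fun k => by
    rw [setIntegral_congr_fun measurableSet_Ioi (fun t ht => norm_term w _ t ht),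
      Real.integral_rpow_mul_exp_neg_mul_Ioi hw0 (hpos k), hre, one_div, Real.inv_rpow, Real.rpow_neg]
    all_goals positivity
  have hsum : Summable fun k => ∫ t in Set.Ioi (0:ℝ), ‖F k t‖ := by
    simp only [hnorm]
    exact (real_sum b hb n hn w.re z.re hw hz).mul_right _
  have hH := hasSum_integral_of_summable_integral_norm hFi hsum
  have hEq : Set.EqOn (fun t => ∑' k, F k t) (fun t : ℝ =>
      (t : ℂ) ^ (w - 1) * exp (-(z * t)) * ∏ j, (1 - exp (-((n j : ℂ) * t)))⁻¹) (Set.Ioi 0) :=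
    fun t ht => hasSum_term b n hn w z t ht
  have hFint : ∀ k, ∫ t in Set.Ioi (0:ℝ), F k t = (z + ∑ j, (k j : ℂ) * (n j : ℂ)) ^ (-w) * Gamma w :=
    fun k => gamma_int w _ hw0 (hpos k)
  have hG : Gamma w ≠ 0 := Gamma_ne_zero_of_re_pos hw0
  refine ⟨?_, ?_, ?_⟩
  · refine ⟨(meas_term w z).mul (Measurable.aestronglyMeasurable (by fun_prop)), ?_⟩
    rw [hasFiniteIntegral_iff_enorm]
    calc _ = ∫⁻ t in Set.Ioi (0:ℝ), ‖∑' k, F k t‖ₑ :=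
          setLIntegral_congr_fun measurableSet_Ioi (fun t ht => congrArg enorm (hEq ht).symm)
      _ ≤ ∫⁻ t in Set.Ioi (0:ℝ), ∑' k, ‖F k t‖ₑ := lintegral_mono fun t => enorm_tsum_le_tsum_enorm
      _ = ∑' k, ∫⁻ t in Set.Ioi (0:ℝ), ‖F k t‖ₑ := lintegral_tsum fun k => (hFi k).1.enorm
      _ = ∑' k, ENNReal.ofReal (∫ t in Set.Ioi (0:ℝ), ‖F k t‖) :=
          tsum_congr fun k => (ofReal_integral_norm_eq_lintegral_enorm (hFi k)).symm
      _ < ⊤ := hsum.tsum_ofReal_lt_top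
  · have := hH.summable
    simp only [hFint] at this
    exact (summable_mul_right_iff hG).1 this
  · rw [← setIntegral_congr_fun measurableSet_Ioi hEq, ← hH.tsum_eq]
    simp only [hFint]
    rw [tsum_mul_right, mul_comm]

lemma expand (ℓ : ℤ) (a b : ℕ) (m : Fin a → ℕ) (n : Fin b → ℕ) (w s : ℂ) (t : ℝ) :
    Complex.exp ((ℓ : ℂ) / 2 * t) *
              (∏ i, (Complex.exp ((m i : ℂ) * t) - 1)) *
              (∏ j, (Complex.exp ((n j : ℂ) * t) - 1))⁻¹ *
            Complex.exp (-(s * t)) * (t : ℂ) ^ (w - 1) =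
    ∑ I ∈ (Finset.univ : Finset (Fin a)).powerset, (-1 : ℂ) ^ (a - I.card) *
      ((t : ℂ) ^ (w - 1) *
        exp (-((s - (ℓ : ℂ) / 2 + (∑ j, (n j : ℂ)) - (∑ i ∈ I, (m i : ℂ))) * t)) *
        ∏ j, (1 - exp (-((n j : ℂ) * t)))⁻¹) := by
  have h1 : (∏ j, (Complex.exp ((n j : ℂ) * t) - 1))⁻¹ =
      exp (-((∑ j, (n j : ℂ)) * t)) * ∏ j, (1 - exp (-((n j : ℂ) * t)))⁻¹ := by
    rw [sum_mul, ← sum_neg_distrib, exp_sum, ← prod_mul_distrib, ← prod_inv_distrib]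
    refine prod_congr rfl fun j _ => ?_
    rw [exp_neg, ← mul_inv, mul_sub, mul_one, mul_inv_cancel₀ (exp_ne_zero _)]
  have h2 : ∏ i, (Complex.exp ((m i : ℂ) * t) - 1) =
      ∑ I ∈ (Finset.univ : Finset (Fin a)).powerset, (-1 : ℂ) ^ (a - I.card) *
        exp ((∑ i ∈ I, (m i : ℂ)) * t) := by
    simp only [sub_eq_add_neg]
    rw [prod_add]
    refine sum_congr rfl fun I hI => ?_
    rw [prod_const, card_sdiff_of_subset (subset_univ I), card_univ, Fintype.card_fin, sum_mul,
      exp_sum, mul_comm]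
  rw [h1, h2, mul_sum, sum_mul, sum_mul, sum_mul]
  refine sum_congr rfl fun I _ => ?_
  rw [show -((s - (ℓ : ℂ) / 2 + (∑ j, (n j : ℂ)) - (∑ i ∈ I, (m i : ℂ))) * (t:ℂ)) =
    (ℓ : ℂ) / 2 * t + (∑ i ∈ I, (m i : ℂ)) * t + -((∑ j, (n j : ℂ)) * t) + -(s * t) by ring,
    exp_add, exp_add, exp_add]
  ring

/-- **Kurokawa.** For `ℓ ∈ ℤ`, positive integers `a, b`, positive integers
`m(1), …, m(a)` and `n(1), …, n(b)`, let
`f(x) = x^{ℓ/2} ∏ᵢ (x^{m(i)} - 1) / ∏ⱼ (x^{n(j)} - 1)`.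
Then for `w, s : ℂ` with `Re w > b` and `Re s > ℓ/2 + |m| - |n|`,
`(1/Γ(w)) ∫₀^∞ f(e^t) e^{-st} t^{w-1} dt
  = Σ_{I ⊆ {1,…,a}} (-1)^{a-|I|} Σ_{k₁,…,k_b ≥ 0}
      (s - ℓ/2 + |n| - m(I) + Σⱼ kⱼ n(j))^{-w}`,
and the integral and all the multiple series converge absolutely. -/
theorem absolute_hurwitz_zeta_kurokawa (ℓ : ℤ) (a b : ℕ) (ha : 0 < a) (hb : 0 < b)
    (m : Fin a → ℕ) (n : Fin b → ℕ) (hm : ∀ i, 0 < m i) (hn : ∀ j, 0 < n j)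
    (w s : ℂ) (hw : (b : ℝ) < w.re)
    (hs : (ℓ : ℝ) / 2 + (∑ i, (m i : ℝ)) - (∑ j, (n j : ℝ)) < s.re) :
    IntegrableOn
      (fun t : ℝ =>
        Complex.exp ((ℓ : ℂ) / 2 * t) *
            (∏ i, (Complex.exp ((m i : ℂ) * t) - 1)) *
            (∏ j, (Complex.exp ((n j : ℂ) * t) - 1))⁻¹ *
          Complex.exp (-(s * t)) * (t : ℂ) ^ (w - 1))
      (Set.Ioi (0 : ℝ)) ∧
    (∀ I : Finset (Fin a),
      Summable (fun k : Fin b → ℕ =>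
        (s - (ℓ : ℂ) / 2 + (∑ j, (n j : ℂ)) - (∑ i ∈ I, (m i : ℂ))
            + ∑ j, (k j : ℂ) * (n j : ℂ)) ^ (-w))) ∧
    (1 / Complex.Gamma w) *
        ∫ t in Set.Ioi (0 : ℝ),
          Complex.exp ((ℓ : ℂ) / 2 * t) *
              (∏ i, (Complex.exp ((m i : ℂ) * t) - 1)) *
              (∏ j, (Complex.exp ((n j : ℂ) * t) - 1))⁻¹ *
            Complex.exp (-(s * t)) * (t : ℂ) ^ (w - 1)
      = ∑ I ∈ (Finset.univ : Finset (Fin a)).powerset,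
          (-1 : ℂ) ^ (a - I.card) *
            ∑' k : Fin b → ℕ,
              (s - (ℓ : ℂ) / 2 + (∑ j, (n j : ℂ)) - (∑ i ∈ I, (m i : ℂ))
                  + ∑ j, (k j : ℂ) * (n j : ℂ)) ^ (-w) := by
  have hre : ∀ I : Finset (Fin a),
      0 < (s - (ℓ : ℂ) / 2 + (∑ j, (n j : ℂ)) - (∑ i ∈ I, (m i : ℂ))).re := fun I => by
    have h1 : ∑ i ∈ I, (m i : ℝ) ≤ ∑ i, (m i : ℝ) :=
      sum_le_sum_of_subset_of_nonneg (subset_univ I) fun _ _ _ => by positivity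
    have h2 : ((ℓ : ℂ) / 2).re = (ℓ : ℝ) / 2 := by
      rw [show (ℓ : ℂ) / 2 = (((ℓ : ℝ) / 2 : ℝ) : ℂ) by push_cast; rfl, ofReal_re]
    rw [sub_re, add_re, sub_re, h2, re_sum, re_sum]
    simp only [natCast_re]
    linarith
  have hk := fun I => key b hb n hn w _ hw (hre I)
  have hG : Gamma w ≠ 0 := Gamma_ne_zero_of_re_pos (lt_of_le_of_lt (by positivity) hw)
  simp only [expand]
  refine ⟨?_, fun I => (hk I).2.1, ?_⟩
  · exact integrable_finsetSum _ fun I _ => (hk I).1.const_mul _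
  · rw [integral_finsetSum _ fun I _ => (hk I).1.const_mul _, mul_sum]
    refine sum_congr rfl fun I _ => ?_
    rw [integral_const_mul, (hk I).2.2]
    field_simp
end
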